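/- Assume in addition that the growth functions C₁, C₂ in the Bernstein hypotheses are constants, and that for every bounded interval J ⊂ I there exist a function φ_J ∈ C²(ℝ^d) with φ_J(x) → +∞ as |x| → +∞ and a constant M_J > 0 such that Tr(Q D²φ_J) + ⟨b,∇φ_J⟩ + cφ_J ≤ M_J on J×ℝ^d. Then for every p ∈ (1,+∞) there exist constants a_p > 0 and ω_p ≥ 0 such that for every s ∈ I, every f ∈ C_b(ℝ^d), every classical solution u bounded on strips with datum f, and every classical solution v bounded on strips with datum |f|^p, one has |∇_x u(t,x)|^p ≤ a_p·max{1,(t−s)^{−p/2}}·e^{ω_p(t−s)}·v(t,x) for all t > s and x ∈ ℝ^d. -/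

import Mathlib

open Set Filter MeasureTheory

noncomputable section

abbrev Euc (d : ℕ) := EuclideanSpace ℝ (Fin d)

noncomputable def hess (d : ℕ) (g : Euc d → ℝ) (x : Euc d) (i j : Fin d) : ℝ :=
  fderiv ℝ (fun y => fderiv ℝ g y (EuclideanSpace.single j 1)) x (EuclideanSpace.single i 1)

noncomputable def minEig (d : ℕ) (A : Fin d → Fin d → ℝ) : ℝ :=
  sInf {r : ℝ | ∃ ξ : Euc d, ‖ξ‖ = 1 ∧ (∑ i, ∑ j, A i j * ξ i * ξ j) = r}

noncomputable def pdist (d : ℕ) (p q : ℝ × Euc d) : ℝ :=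
  Real.sqrt |p.1 - q.1| + ‖p.2 - q.2‖

def LocHolderParab (d : ℕ) (α : ℝ) (I : Set ℝ) (g : ℝ → Euc d → ℝ) : Prop :=
  ∀ K : Set (ℝ × Euc d), IsCompact K → K ⊆ I ×ˢ (univ : Set (Euc d)) →
    ∃ C > 0, ∀ p ∈ K, ∀ q ∈ K, |g p.1 p.2 - g q.1 q.2| ≤ C * pdist d p q ^ α

noncomputable def Aop (d : ℕ) (Q : ℝ → Euc d → Fin d → Fin d → ℝ)
    (b : ℝ → Euc d → Fin d → ℝ) (c : ℝ → Euc d → ℝ)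
    (t : ℝ) (g : Euc d → ℝ) (x : Euc d) : ℝ :=
  (∑ i, ∑ j, Q t x i j * hess d g x i j)
    + (∑ i, b t x i * fderiv ℝ g x (EuclideanSpace.single i 1))
    + c t x * g x

structure IsClassicalSolution (d : ℕ) (Q : ℝ → Euc d → Fin d → Fin d → ℝ)
    (b : ℝ → Euc d → Fin d → ℝ) (c : ℝ → Euc d → ℝ)
    (s : ℝ) (f : Euc d → ℝ) (u : ℝ → Euc d → ℝ) : Prop where
  cont : ContinuousOn (fun p : ℝ × Euc d => u p.1 p.2) (Ici s ×ˢ univ)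
  tdiff : ∀ t, s < t → ∀ x, DifferentiableAt ℝ (fun τ => u τ x) t
  tderiv_cont : ContinuousOn (fun p : ℝ × Euc d => deriv (fun τ => u τ p.2) p.1) (Ioi s ×ˢ univ)
  xdiff : ∀ t, s < t → ContDiff ℝ 2 (u t)
  grad_cont : ContinuousOn (fun p : ℝ × Euc d => fderiv ℝ (u p.1) p.2) (Ioi s ×ˢ univ)
  hess_cont : ContinuousOn (fun p : ℝ × Euc d => hess d (u p.1) p.2) (Ioi s ×ˢ univ)
  pde : ∀ t, s < t → ∀ x, deriv (fun τ => u τ x) t = Aop d Q b c t (u t) x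
  init : ∀ x, u s x = f x

def BoundedOnStrips (d : ℕ) (s : ℝ) (u : ℝ → Euc d → ℝ) : Prop :=
  ∀ T, s < T → ∃ M, ∀ t ∈ Icc s T, ∀ x, |u t x| ≤ M

def LocBddOn (I : Set ℝ) (g : ℝ → ℝ) : Prop :=
  ∀ a b : ℝ, Icc a b ⊆ I → ∃ M, ∀ t ∈ Icc a b, |g t| ≤ M

/-!
Bernstein's method. For a cutoff function `θ`, the energy `u² + τ(t) θ² |∇u|²`, with `τ(t)` growing
linearly from `0` on a short time interval, is compared with `e^{λ(t - s)} V^{2/p}`. Here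
`V = v + η W`, where `W` is a supersolution that tends to `+∞` at infinity, obtained from the
Lyapunov function: since `V` is coercive and the energy is bounded, a failure of the comparison
produces a touching point.

At the touching point the gradients of the two functions are proportional. By the Cauchy-Schwarz
inequality, the term `⟨Q∇V, ∇V⟩ / V²` coming from the power `V^{2/p}` is then controlled by the
good quadratic terms `⟨Q∇u, ∇u⟩ + τ ∑ₖ ⟨Q∇(θ∂ₖu), ∇(θ∂ₖu)⟩` of the energy, and because `2/p < 2` a
fixed fraction of these is left over. With `τ` small, that fraction absorbs the commutators of the
operator with `∂ₖ` and with `θ`, whose sizes the Bernstein hypotheses compare with the ellipticity.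
What remains is of order zero in `u` and is beaten by `λ`.

Solutions are only `C²` in space, so the gradient is replaced by difference quotients with step `h`;
the touching points stay in a compact set and survive the limit `h → 0`. Letting `η → 0` turns `V`
into `v`.
-/

section Calculus

variable {d : ℕ}

/-- The vector of partial derivatives `(∂₁g(x), …, ∂_d g(x))`, in coordinates. -/
def grad (g : Euc d → ℝ) (x : Euc d) (i : Fin d) : ℝ :=
  fderiv ℝ g x (EuclideanSpace.single i 1)

/-- The bilinear form `q(ξ, η) = ∑ᵢⱼ qᵢⱼ ξᵢ ηⱼ` of a matrix. -/
def bilin (q : Fin d → Fin d → ℝ) : LinearMap.BilinForm ℝ (Fin d → ℝ) :=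
  Matrix.toBilin' (Matrix.of q)

/-- The operator `Tr(q D²g) + ⟨β, ∇g⟩`, with coefficients frozen at one point and no potential. -/
def ellipticOp (q : Fin d → Fin d → ℝ) (β : Fin d → ℝ) (g : Euc d → ℝ) (x : Euc d) : ℝ :=
  (∑ i, ∑ j, q i j * hess d g x i j) + ∑ i, β i * grad g x i

theorem bilin_apply (q : Fin d → Fin d → ℝ) (ξ η : Fin d → ℝ) :
    bilin q ξ η = ∑ i, ∑ j, q i j * ξ i * η j := by
  simp only [bilin, Matrix.toBilin'_apply, Matrix.of_apply, mul_comm (ξ _)]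

theorem bilin_comm {q : Fin d → Fin d → ℝ} (hq : (Matrix.of q).PosSemidef) (ξ η : Fin d → ℝ) :
    bilin q ξ η = bilin q η ξ := by
  rw [bilin_apply, bilin_apply, Finset.sum_comm]
  refine Finset.sum_congr rfl fun i _ => Finset.sum_congr rfl fun j _ => ?_
  have hij : q j i = q i j := by simpa using hq.isHermitian.apply i j
  rw [hij]
  ring

theorem bilin_self_nonneg {q : Fin d → Fin d → ℝ} (hq : (Matrix.of q).PosSemidef)
    (ξ : Fin d → ℝ) : 0 ≤ bilin q ξ ξ := by
  simpa [bilin, Matrix.toBilin'_apply'] using hq.dotProduct_mulVec_nonneg ξ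

theorem exists_eq_sum_mul_of_posSemidef {q : Fin d → Fin d → ℝ} (hq : (Matrix.of q).PosSemidef) :
    ∃ (m : ℕ) (B : Fin m → Fin d → ℝ), ∀ i j, q i j = ∑ l, B l i * B l j := by
  obtain ⟨m, B, hB⟩ := Matrix.posSemidef_iff_eq_sum_vecMulVec.mp hq
  exact ⟨m, B, fun i j => by
    simpa [Matrix.sum_apply, Matrix.vecMulVec_apply] using congrFun (congrFun hB i) j⟩

theorem sum_mul_nonneg_of_posSemidef {q H : Fin d → Fin d → ℝ} (hq : (Matrix.of q).PosSemidef)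
    (hH : ∀ ξ, 0 ≤ bilin H ξ ξ) : 0 ≤ ∑ i, ∑ j, q i j * H i j := by
  obtain ⟨m, B, hB⟩ := exists_eq_sum_mul_of_posSemidef hq
  have hsum : ∑ i, ∑ j, q i j * H i j = ∑ l, bilin H (B l) (B l) := by
    simp only [bilin_apply, hB, Finset.sum_mul]
    rw [Finset.sum_comm (s := (Finset.univ : Finset (Fin m)))]
    refine Finset.sum_congr rfl fun i _ => ?_
    rw [Finset.sum_comm]
    refine Finset.sum_congr rfl fun l _ => Finset.sum_congr rfl fun j _ => by ring
  rw [hsum]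
  exact Finset.sum_nonneg fun l _ => hH (B l)

theorem bilin_self_eq_sum_sq {m : ℕ} {q : Fin d → Fin d → ℝ} {B : Fin m → Fin d → ℝ}
    (hB : ∀ i j, q i j = ∑ l, B l i * B l j) (ξ : Fin d → ℝ) :
    bilin q ξ ξ = ∑ l, (∑ i, B l i * ξ i) ^ 2 := by
  simp only [bilin_apply, hB, Finset.sum_mul, sq]
  rw [Finset.sum_comm_cycle]
  refine Finset.sum_congr rfl fun l _ => ?_
  rw [Finset.sum_comm]
  refine Finset.sum_congr rfl fun i _ => ?_
  rw [Finset.mul_sum]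
  exact Finset.sum_congr rfl fun j _ => by ring

theorem bilin_sum_smul_le {ι : Type*} [Fintype ι] {q : Fin d → Fin d → ℝ}
    (hq : (Matrix.of q).PosSemidef) {a : ι → ℝ} (ha : ∀ k, 0 ≤ a k) (y : ι → ℝ)
    (ξ : ι → Fin d → ℝ) :
    bilin q (∑ k, (a k * y k) • ξ k) (∑ k, (a k * y k) • ξ k)
      ≤ (∑ k, a k * y k ^ 2) * ∑ k, a k * bilin q (ξ k) (ξ k) := by
  obtain ⟨m, B, hB⟩ := exists_eq_sum_mul_of_posSemidef hq
  have hlin (l : Fin m) : ∑ i, B l i * (∑ k, (a k * y k) • ξ k) i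
      = ∑ k, a k * y k * ∑ i, B l i * ξ k i := by
    simp only [Finset.sum_apply, Pi.smul_apply, smul_eq_mul, Finset.mul_sum]
    rw [Finset.sum_comm]
    exact Finset.sum_congr rfl fun k _ => Finset.sum_congr rfl fun i _ => by ring
  simp only [bilin_self_eq_sum_sq hB, hlin, Finset.mul_sum (s := (Finset.univ : Finset (Fin m)))]
  rw [Finset.sum_comm (s := (Finset.univ : Finset ι)), Finset.mul_sum]
  refine Finset.sum_le_sum fun l _ => Finset.sum_sq_le_sum_mul_sum_of_sq_le_mul _
    (fun k _ => mul_nonneg (ha k) (sq_nonneg _)) (fun k _ => mul_nonneg (ha k) (sq_nonneg _))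
    fun k _ => le_of_eq (by ring)

theorem clm_apply_eq_sum (l : Euc d →L[ℝ] ℝ) (ξ : Euc d) :
    l ξ = ∑ i, ξ i * l (EuclideanSpace.single i 1) := by
  conv_lhs => rw [← (EuclideanSpace.basisFun (Fin d) ℝ).sum_repr ξ, map_sum]
  simp

theorem grad_add {f g : Euc d → ℝ} {x : Euc d} (hf : DifferentiableAt ℝ f x)
    (hg : DifferentiableAt ℝ g x) : grad (fun y => f y + g y) x = grad f x + grad g x := by
  ext i
  simp [grad, fderiv_fun_add hf hg]

theorem grad_const_mul {f : Euc d → ℝ} {x : Euc d} (hf : DifferentiableAt ℝ f x) (a : ℝ) :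
    grad (fun y => a * f y) x = a • grad f x := by
  ext i
  simp [grad, fderiv_const_mul hf]

theorem grad_mul {f g : Euc d → ℝ} {x : Euc d} (hf : DifferentiableAt ℝ f x)
    (hg : DifferentiableAt ℝ g x) :
    grad (fun y => f y * g y) x = f x • grad g x + g x • grad f x := by
  ext i
  simp [grad, fderiv_fun_mul hf hg]

theorem grad_sum {ι : Type*} [Fintype ι] {f : ι → Euc d → ℝ} {x : Euc d}
    (hf : ∀ k, DifferentiableAt ℝ (f k) x) :
    grad (fun y => ∑ k, f k y) x = ∑ k, grad (f k) x := by
  ext i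
  simp [grad, fderiv_fun_sum fun k _ => hf k]

theorem grad_comp {f : Euc d → ℝ} {x : Euc d} {Φ : ℝ → ℝ} {Φ' : ℝ}
    (hΦ : HasDerivAt Φ Φ' (f x)) (hf : DifferentiableAt ℝ f x) :
    grad (fun y => Φ (f y)) x = Φ' • grad f x := by
  have h : HasFDerivAt (fun y => Φ (f y)) (Φ' • fderiv ℝ f x) x :=
    hΦ.comp_hasFDerivAt x hf.hasFDerivAt
  ext i
  simp [grad, h.fderiv]

theorem grad_comp_add_right (f : Euc d → ℝ) (v x : Euc d) :
    grad (fun y => f (y + v)) x = grad f (x + v) := by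
  ext i
  simp only [grad, fderiv_comp_add_right]

theorem hess_eq_grad (g : Euc d → ℝ) (x : Euc d) (i j : Fin d) :
    hess d g x i j = grad (fun y => grad g y j) x i := rfl

theorem differentiable_grad {g : Euc d → ℝ} (hg : ContDiff ℝ 2 g) (j : Fin d) :
    Differentiable ℝ (fun x => grad g x j) := by
  have hg' : Differentiable ℝ (fderiv ℝ g) :=
    (hg.fderiv_right (m := 1) (by norm_num)).differentiable one_ne_zero
  exact fun x => (hg' x).clm_apply (differentiableAt_const _)

theorem hess_add {f g : Euc d → ℝ} (hf : ContDiff ℝ 2 f) (hg : ContDiff ℝ 2 g) (x : Euc d)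
    (i j : Fin d) : hess d (fun y => f y + g y) x i j = hess d f x i j + hess d g x i j := by
  simp only [hess_eq_grad, grad_add (hf.differentiable two_ne_zero _)
    (hg.differentiable two_ne_zero _), Pi.add_apply]
  rw [grad_add (differentiable_grad hf j x) (differentiable_grad hg j x), Pi.add_apply]

theorem hess_const_mul {f : Euc d → ℝ} (hf : ContDiff ℝ 2 f) (a : ℝ) (x : Euc d) (i j : Fin d) :
    hess d (fun y => a * f y) x i j = a * hess d f x i j := by
  simp only [hess_eq_grad, grad_const_mul (hf.differentiable two_ne_zero _), Pi.smul_apply,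
    smul_eq_mul]
  rw [grad_const_mul (differentiable_grad hf j x), Pi.smul_apply, smul_eq_mul]

theorem hess_mul {f g : Euc d → ℝ} (hf : ContDiff ℝ 2 f) (hg : ContDiff ℝ 2 g) (x : Euc d)
    (i j : Fin d) :
    hess d (fun y => f y * g y) x i j = f x * hess d g x i j + g x * hess d f x i j
      + grad f x i * grad g x j + grad g x i * grad f x j := by
  have hf' := hf.differentiable two_ne_zero
  have hg' := hg.differentiable two_ne_zero
  simp only [hess_eq_grad, grad_mul (hf' _) (hg' _), Pi.add_apply, Pi.smul_apply, smul_eq_mul]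
  rw [grad_add ((hf' x).fun_mul (differentiable_grad hg j x))
      ((hg' x).fun_mul (differentiable_grad hf j x)),
    grad_mul (hf' x) (differentiable_grad hg j x), grad_mul (hg' x) (differentiable_grad hf j x)]
  simp only [Pi.add_apply, Pi.smul_apply, smul_eq_mul]
  ring

theorem hess_sum {ι : Type*} [Fintype ι] {f : ι → Euc d → ℝ} (hf : ∀ k, ContDiff ℝ 2 (f k))
    (x : Euc d) (i j : Fin d) : hess d (fun y => ∑ k, f k y) x i j = ∑ k, hess d (f k) x i j := by
  simp only [hess_eq_grad, grad_sum fun k => (hf k).differentiable two_ne_zero _, Finset.sum_apply]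
  rw [grad_sum fun k => differentiable_grad (hf k) j x, Finset.sum_apply]

theorem hess_comp {f : Euc d → ℝ} (hf : ContDiff ℝ 2 f) {Φ Φ' : ℝ → ℝ} {Φ'' : ℝ} {x : Euc d}
    (hΦ : ∀ y, HasDerivAt Φ (Φ' (f y)) (f y)) (hΦ' : HasDerivAt Φ' Φ'' (f x)) (i j : Fin d) :
    hess d (fun y => Φ (f y)) x i j
      = Φ' (f x) * hess d f x i j + Φ'' * grad f x i * grad f x j := by
  have hf' := hf.differentiable two_ne_zero
  simp only [hess_eq_grad, grad_comp (hΦ _) (hf' _), Pi.smul_apply, smul_eq_mul]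
  have hΦf : DifferentiableAt ℝ (fun y => Φ' (f y)) x :=
    (hΦ'.comp_hasFDerivAt x (hf' x).hasFDerivAt).differentiableAt
  rw [grad_mul hΦf (differentiable_grad hf j x), grad_comp hΦ' (hf' x)]
  simp only [Pi.add_apply, Pi.smul_apply, smul_eq_mul]
  ring

theorem hess_comp_add_right (f : Euc d → ℝ) (v x : Euc d) (i j : Fin d) :
    hess d (fun y => f (y + v)) x i j = hess d f (x + v) i j := by
  simp only [hess_eq_grad, grad_comp_add_right]
  rw [grad_comp_add_right (fun y => grad f y j)]

variable (q : Fin d → Fin d → ℝ) (β : Fin d → ℝ)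

theorem ellipticOp_add {f g : Euc d → ℝ} (hf : ContDiff ℝ 2 f) (hg : ContDiff ℝ 2 g)
    (x : Euc d) :
    ellipticOp q β (fun y => f y + g y) x = ellipticOp q β f x + ellipticOp q β g x := by
  simp only [ellipticOp, hess_add hf hg, grad_add (hf.differentiable two_ne_zero x)
    (hg.differentiable two_ne_zero x), Pi.add_apply, mul_add, Finset.sum_add_distrib]
  ring

theorem ellipticOp_const_mul {f : Euc d → ℝ} (hf : ContDiff ℝ 2 f) (a : ℝ) (x : Euc d) :
    ellipticOp q β (fun y => a * f y) x = a * ellipticOp q β f x := by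
  simp only [ellipticOp, hess_const_mul hf, grad_const_mul (hf.differentiable two_ne_zero x),
    Pi.smul_apply, smul_eq_mul, mul_add, Finset.mul_sum, mul_left_comm a]

theorem ellipticOp_sum {ι : Type*} [Fintype ι] {f : ι → Euc d → ℝ} (hf : ∀ k, ContDiff ℝ 2 (f k))
    (x : Euc d) : ellipticOp q β (fun y => ∑ k, f k y) x = ∑ k, ellipticOp q β (f k) x := by
  simp only [ellipticOp, hess_sum hf, grad_sum fun k => (hf k).differentiable two_ne_zero x,
    Finset.sum_apply, Finset.mul_sum, Finset.sum_add_distrib]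
  congr 1
  · exact Finset.sum_comm_cycle
  · exact Finset.sum_comm

theorem ellipticOp_comp_add_right (f : Euc d → ℝ) (v x : Euc d) :
    ellipticOp q β (fun y => f (y + v)) x = ellipticOp q β f (x + v) := by
  simp only [ellipticOp, hess_comp_add_right, grad_comp_add_right]

theorem ellipticOp_comp {f : Euc d → ℝ} (hf : ContDiff ℝ 2 f) {Φ Φ' : ℝ → ℝ} {Φ'' : ℝ}
    {x : Euc d} (hΦ : ∀ y, HasDerivAt Φ (Φ' (f y)) (f y)) (hΦ' : HasDerivAt Φ' Φ'' (f x)) :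
    ellipticOp q β (fun y => Φ (f y)) x
      = Φ' (f x) * ellipticOp q β f x + Φ'' * bilin q (grad f x) (grad f x) := by
  simp only [ellipticOp, bilin_apply, hess_comp hf hΦ hΦ',
    grad_comp (hΦ x) (hf.differentiable two_ne_zero x), Pi.smul_apply, smul_eq_mul, mul_add,
    Finset.mul_sum, Finset.sum_add_distrib, mul_assoc, mul_left_comm (Φ' (f x)),
    mul_left_comm Φ'']
  ring

variable {q}

theorem ellipticOp_mul (hq : (Matrix.of q).PosSemidef) {f g : Euc d → ℝ} (hf : ContDiff ℝ 2 f)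
    (hg : ContDiff ℝ 2 g) (x : Euc d) :
    ellipticOp q β (fun y => f y * g y) x = f x * ellipticOp q β g x + g x * ellipticOp q β f x
      + 2 * bilin q (grad f x) (grad g x) := by
  rw [two_mul]
  nth_rw 2 [bilin_comm hq]
  simp only [ellipticOp, bilin_apply, hess_mul hf hg, grad_mul (hf.differentiable two_ne_zero x)
    (hg.differentiable two_ne_zero x), Pi.add_apply, Pi.smul_apply, smul_eq_mul, mul_add,
    Finset.mul_sum, Finset.sum_add_distrib, mul_assoc, mul_left_comm (f x), mul_left_comm (g x)]
  ring

theorem ellipticOp_sq (hq : (Matrix.of q).PosSemidef) {f : Euc d → ℝ} (hf : ContDiff ℝ 2 f)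
    (x : Euc d) :
    ellipticOp q β (fun y => f y ^ 2) x
      = 2 * f x * ellipticOp q β f x + 2 * bilin q (grad f x) (grad f x) := by
  simp only [sq, ellipticOp_mul β hq hf hf]
  ring

end Calculus

section MaximumPrinciple

theorem nonpos_of_hasDerivAt_of_isMinOn_Icc {f : ℝ → ℝ} {f' a t : ℝ} (hat : a < t)
    (hf : HasDerivAt f f' t) (hmin : IsMinOn f (Icc a t) t) : f' ≤ 0 := by
  have hmem : a - t ∈ posTangentConeAt (Icc a t) t :=
    sub_mem_posTangentConeAt_of_segment_subset (by rw [segment_symm, segment_eq_Icc hat.le])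
  have h := hmin.localize.hasFDerivWithinAt_nonneg hf.hasFDerivAt.hasFDerivWithinAt hmem
  simp only [ContinuousLinearMap.toSpanSingleton_apply, smul_eq_mul] at h
  nlinarith

theorem deriv_deriv_nonneg_of_isLocalMin {f : ℝ → ℝ} {a : ℝ} (hf : ContinuousAt f a)
    (hmin : IsLocalMin f a) : 0 ≤ deriv (deriv f) a := by
  by_contra! hneg
  have hmax : IsLocalMax f a := by
    have h : IsLocalMin (-f) a :=
      isLocalMin_of_deriv_deriv_pos (by simpa [deriv.neg'] using hneg)
        (by simp [hmin.deriv_eq_zero]) hf.neg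
    simpa using h.neg
  have hconst : f =ᶠ[nhds a] fun _ => f a := by
    filter_upwards [hmax, hmin] with y h₁ h₂ using le_antisymm h₁ h₂
  have hderiv : deriv (deriv f) a = 0 := by simpa using hconst.deriv.deriv_eq
  exact hneg.ne hderiv

variable {d : ℕ}

theorem hasDerivAt_comp_line {g : Euc d → ℝ} (hg : Differentiable ℝ g) (x ξ : Euc d) (σ : ℝ) :
    HasDerivAt (fun σ : ℝ => g (x + σ • ξ)) (∑ i, ξ i * grad g (x + σ • ξ) i) σ := by
  have hline : HasDerivAt (fun σ : ℝ => x + σ • ξ) ξ σ := by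
    simpa using ((hasDerivAt_id σ).smul_const ξ).const_add x
  simp only [grad, ← clm_apply_eq_sum]
  exact (hg (x + σ • ξ)).hasFDerivAt.comp_hasDerivAt σ hline

theorem deriv_deriv_comp_line {g : Euc d → ℝ} (hg : ContDiff ℝ 2 g) (x ξ : Euc d) :
    deriv (deriv fun σ : ℝ => g (x + σ • ξ)) 0 = bilin (hess d g x) ξ ξ := by
  have h₁ : deriv (fun σ : ℝ => g (x + σ • ξ)) = fun σ => ∑ j, ξ j * grad g (x + σ • ξ) j :=
    funext fun σ => (hasDerivAt_comp_line (hg.differentiable two_ne_zero) x ξ σ).deriv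
  have h₂ := HasDerivAt.fun_sum (u := Finset.univ) fun j _ =>
    (hasDerivAt_comp_line (differentiable_grad hg j) x ξ 0).const_mul (ξ j)
  rw [h₁, h₂.deriv, bilin_apply, Finset.sum_comm]
  refine Finset.sum_congr rfl fun j _ => ?_
  rw [Finset.mul_sum]
  refine Finset.sum_congr rfl fun i _ => ?_
  rw [zero_smul, add_zero, hess_eq_grad]
  ring

theorem grad_eq_zero_of_isLocalMin {g : Euc d → ℝ} {x : Euc d} (hmin : IsLocalMin g x) :
    grad g x = 0 := by
  ext i
  simp [grad, hmin.fderiv_eq_zero]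

theorem ellipticOp_nonneg_of_isLocalMin {q : Fin d → Fin d → ℝ} (β : Fin d → ℝ)
    (hq : (Matrix.of q).PosSemidef) {g : Euc d → ℝ} (hg : ContDiff ℝ 2 g) {x : Euc d}
    (hmin : IsLocalMin g x) : 0 ≤ ellipticOp q β g x := by
  simp only [ellipticOp, grad_eq_zero_of_isLocalMin hmin, Pi.zero_apply, mul_zero,
    Finset.sum_const_zero, add_zero]
  refine sum_mul_nonneg_of_posSemidef hq fun ξ => ?_
  have hline : ContinuousAt (fun σ : ℝ => x + σ • WithLp.toLp 2 ξ) 0 := by fun_prop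
  have hmin' : IsLocalMin (fun σ : ℝ => g (x + σ • WithLp.toLp 2 ξ)) 0 :=
    IsLocalMin.comp_continuous (by simpa using hmin) hline
  simpa only [deriv_deriv_comp_line hg] using
    deriv_deriv_nonneg_of_isLocalMin (hasDerivAt_comp_line
      (hg.differentiable two_ne_zero) x _ 0).continuousAt hmin'

theorem exists_touching_point {E : Type*} [NormedAddCommGroup E] [ProperSpace E] {s T ρ : ℝ}
    {G D : ℝ → E → ℝ} (hG : ContinuousOn (fun p : ℝ × E => G p.1 p.2) (Icc s T ×ˢ univ))
    (hD : ContinuousOn (fun p : ℝ × E => D p.1 p.2) (Icc s T ×ˢ univ))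
    (hDpos : ∀ t ∈ Icc s T, ∀ x, 0 < D t x) (hinit : ∀ x, G s x ≤ D s x)
    (hfar : ∀ t ∈ Icc s T, ∀ x, ρ ≤ ‖x‖ → G t x ≤ D t x)
    {t₁ : ℝ} (ht₁ : t₁ ∈ Icc s T) {x₁ : E} (hbad : D t₁ x₁ < G t₁ x₁) :
    ∃ R > 1, ∃ t ∈ Ioc s T, ∃ x, ‖x‖ ≤ ρ ∧ G t x = R * D t x ∧
      ∀ τ ∈ Icc s T, ∀ y, G τ y ≤ R * D τ y := by
  have hx₁ : (t₁, x₁) ∈ Icc s T ×ˢ Metric.closedBall (0 : E) ρ := by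
    refine ⟨ht₁, mem_closedBall_zero_iff.2 (le_of_not_gt fun h => ?_)⟩
    exact hbad.not_ge (hfar t₁ ht₁ x₁ h.le)
  obtain ⟨⟨t, x⟩, ⟨ht, hx⟩, hmax⟩ :=
    (isCompact_Icc.prod (isCompact_closedBall (0 : E) ρ)).exists_isMaxOn ⟨_, hx₁⟩
      ((hG.div hD fun p hp => (hDpos p.1 hp.1 p.2).ne').mono (prod_mono le_rfl (subset_univ _)))
  set R := G t x / D t x with hR
  have hR1 : 1 < R := ((one_lt_div (hDpos t₁ ht₁ x₁)).2 hbad).trans_le (hmax hx₁)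
  have htouch : G t x = R * D t x := (div_mul_cancel₀ _ (hDpos t ht x).ne').symm
  have hts : s ≠ t := by
    rintro rfl
    nlinarith [hinit x, hDpos s ht x]
  refine ⟨R, hR1, t, ⟨lt_of_le_of_ne ht.1 hts, ht.2⟩, x, mem_closedBall_zero_iff.1 hx, htouch,
    fun τ hτ y => ?_⟩
  rcases le_total ‖y‖ ρ with hy | hy
  · exact (div_le_iff₀ (hDpos τ hτ y)).1 (hmax (a := (τ, y)) ⟨hτ, mem_closedBall_zero_iff.2 hy⟩)
  · exact (hfar τ hτ y hy).trans (le_mul_of_one_le_left (hDpos τ hτ y).le hR1.le)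

end MaximumPrinciple

section ForcedSolutions

variable {d : ℕ} {Q : ℝ → Euc d → Fin d → Fin d → ℝ} {b : ℝ → Euc d → Fin d → ℝ}
  {c : ℝ → Euc d → ℝ} {s T : ℝ}

/-- `w` solves `D_t w = Tr(Q D²w) + ⟨b, ∇w⟩ + c w + F` on `(s, T] × ℝ^d` and is continuous up to
time `s`. Solutions, supersolutions (`0 ≤ F`), difference quotients of solutions and powers of
solutions are all of this form, with different forcing terms `F`. -/
structure IsForcedSolution (Q : ℝ → Euc d → Fin d → Fin d → ℝ) (b : ℝ → Euc d → Fin d → ℝ)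
    (c : ℝ → Euc d → ℝ) (s T : ℝ) (F w : ℝ → Euc d → ℝ) : Prop where
  continuousOn : ContinuousOn (fun p : ℝ × Euc d => w p.1 p.2) (Icc s T ×ˢ univ)
  contDiff : ∀ t ∈ Ioc s T, ContDiff ℝ 2 (w t)
  hasDerivAt : ∀ t ∈ Ioc s T, ∀ x, HasDerivAt (fun τ => w τ x)
    (ellipticOp (Q t x) (b t x) (w t) x + c t x * w t x + F t x) t

/-- A positive strict supersolution on `(s, T] × ℝ^d` that tends to `+∞` as `|x| → +∞`, uniformly
in `t ∈ [s, T]`; it confines maximum points to a ball. -/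
structure IsCoerciveSupersolution (Q : ℝ → Euc d → Fin d → Fin d → ℝ)
    (b : ℝ → Euc d → Fin d → ℝ) (c : ℝ → Euc d → ℝ) (s T : ℝ) (V : ℝ → Euc d → ℝ) : Prop where
  exists_forcing : ∃ F, IsForcedSolution Q b c s T F V ∧ ∀ t ∈ Ioc s T, ∀ x, 0 < F t x
  pos : ∀ t ∈ Icc s T, ∀ x, 0 < V t x
  coercive : ∀ B, ∃ ρ, ∀ t ∈ Icc s T, ∀ x : Euc d, ρ ≤ ‖x‖ → B ≤ V t x

theorem IsClassicalSolution.isForcedSolution {f : Euc d → ℝ} {u : ℝ → Euc d → ℝ} {s₀ : ℝ}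
    (hu : IsClassicalSolution d Q b c s₀ f u) (hs : s₀ ≤ s) :
    IsForcedSolution Q b c s T (fun _ _ => 0) u where
  continuousOn := hu.cont.mono (prod_mono (fun _ ht => hs.trans ht.1) le_rfl)
  contDiff t ht := hu.xdiff t (hs.trans_lt ht.1)
  hasDerivAt t ht x := by
    refine (hu.tdiff t (hs.trans_lt ht.1) x).hasDerivAt.congr_deriv ?_
    rw [hu.pde t (hs.trans_lt ht.1) x, add_zero]
    rfl

namespace IsForcedSolution

variable {F F' w w' : ℝ → Euc d → ℝ}

theorem add (hw : IsForcedSolution Q b c s T F w) (hw' : IsForcedSolution Q b c s T F' w') :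
    IsForcedSolution Q b c s T (fun t x => F t x + F' t x) (fun t x => w t x + w' t x) where
  continuousOn := hw.continuousOn.add hw'.continuousOn
  contDiff t ht := (hw.contDiff t ht).add (hw'.contDiff t ht)
  hasDerivAt t ht x := by
    refine ((hw.hasDerivAt t ht x).add (hw'.hasDerivAt t ht x)).congr_deriv ?_
    rw [ellipticOp_add _ _ (hw.contDiff t ht) (hw'.contDiff t ht)]
    ring

theorem const_mul (hw : IsForcedSolution Q b c s T F w) (a : ℝ) :
    IsForcedSolution Q b c s T (fun t x => a * F t x) (fun t x => a * w t x) where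
  continuousOn := hw.continuousOn.const_mul a
  contDiff t ht := contDiff_const.mul (hw.contDiff t ht)
  hasDerivAt t ht x := by
    refine ((hw.hasDerivAt t ht x).const_mul a).congr_deriv ?_
    rw [ellipticOp_const_mul _ _ (hw.contDiff t ht)]
    ring

theorem mul_left (hw : IsForcedSolution Q b c s T F w)
    (hQ : ∀ t ∈ Ioc s T, ∀ x, (Matrix.of (Q t x)).PosSemidef) {θ : Euc d → ℝ}
    (hθ : ContDiff ℝ 2 θ) :
    IsForcedSolution Q b c s T
      (fun t x => θ x * F t x - w t x * ellipticOp (Q t x) (b t x) θ x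
        - 2 * bilin (Q t x) (grad θ x) (grad (w t) x))
      (fun t x => θ x * w t x) where
  continuousOn := (hθ.continuous.comp continuous_snd).continuousOn.mul hw.continuousOn
  contDiff t ht := hθ.mul (hw.contDiff t ht)
  hasDerivAt t ht x := by
    refine ((hw.hasDerivAt t ht x).const_mul (θ x)).congr_deriv ?_
    rw [ellipticOp_mul _ (hQ t ht x) hθ (hw.contDiff t ht)]
    ring

theorem sum_mul_sq {ι : Type*} [Fintype ι] {F g : ι → ℝ → Euc d → ℝ}
    (hg : ∀ k, IsForcedSolution Q b c s T (F k) (g k))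
    (hQ : ∀ t ∈ Ioc s T, ∀ x, (Matrix.of (Q t x)).PosSemidef) {a a' : ι → ℝ → ℝ}
    (ha : ∀ k t, HasDerivAt (a k) (a' k t) t) :
    IsForcedSolution Q b c s T
      (fun t x => c t x * ∑ k, a k t * g k t x ^ 2
        - 2 * ∑ k, a k t * bilin (Q t x) (grad (g k t) x) (grad (g k t) x)
        + ∑ k, (a' k t * g k t x ^ 2 + 2 * (a k t * g k t x * F k t x)))
      (fun t x => ∑ k, a k t * g k t x ^ 2) where
  continuousOn := continuousOn_finsetSum _ fun k _ =>
    ((continuous_iff_continuousAt.2 fun t => (ha k t).continuousAt).comp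
      continuous_fst).continuousOn.mul ((hg k).continuousOn.pow 2)
  contDiff t ht := ContDiff.sum fun k _ => contDiff_const.mul (((hg k).contDiff t ht).pow 2)
  hasDerivAt t ht x := by
    refine (HasDerivAt.fun_sum fun k _ =>
      (ha k t).fun_mul (((hg k).hasDerivAt t ht x).fun_pow 2)).congr_deriv ?_
    rw [ellipticOp_sum _ _ fun k => contDiff_const.mul (((hg k).contDiff t ht).pow 2)]
    simp only [ellipticOp_const_mul _ _ (((hg _).contDiff t ht).pow 2),
      ellipticOp_sq _ (hQ t ht x) ((hg _).contDiff t ht), Finset.mul_sum,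
      ← Finset.sum_add_distrib, ← Finset.sum_sub_distrib]
    exact Finset.sum_congr rfl fun k _ => by ring

theorem rpow_mul_exp (hw : IsForcedSolution Q b c s T F w) (hpos : ∀ t ∈ Icc s T, ∀ x, 0 < w t x)
    (lam t₀ r : ℝ) :
    IsForcedSolution Q b c s T
      (fun t x => (lam + (r - 1) * c t x + r * F t x / w t x)
          * (Real.exp (lam * (t - t₀)) * w t x ^ r)
        - (r - 1) / r * (bilin (Q t x) (grad (fun y => Real.exp (lam * (t - t₀)) * w t y ^ r) x)
          (grad (fun y => Real.exp (lam * (t - t₀)) * w t y ^ r) x)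
            / (Real.exp (lam * (t - t₀)) * w t x ^ r)))
      (fun t x => Real.exp (lam * (t - t₀)) * w t x ^ r) where
  continuousOn := ContinuousOn.mul (by fun_prop)
    (hw.continuousOn.rpow_const fun p hp => Or.inl (hpos p.1 hp.1 p.2).ne')
  contDiff t ht := contDiff_const.mul ((hw.contDiff t ht).rpow_const_of_ne fun x =>
    (hpos t (Ioc_subset_Icc_self ht) x).ne')
  hasDerivAt t ht x := by
    have hwt := hw.contDiff t ht
    have hne (y : Euc d) : w t y ≠ 0 := (hpos t (Ioc_subset_Icc_self ht) y).ne'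
    have hΦ (y : Euc d) : HasDerivAt (fun z : ℝ => Real.exp (lam * (t - t₀)) * z ^ r)
        (Real.exp (lam * (t - t₀)) * (r * w t y ^ (r - 1))) (w t y) :=
      (Real.hasDerivAt_rpow_const (Or.inl (hne y))).const_mul _
    have hΦ' : HasDerivAt (fun z : ℝ => Real.exp (lam * (t - t₀)) * (r * z ^ (r - 1)))
        (Real.exp (lam * (t - t₀)) * (r * ((r - 1) * w t x ^ (r - 1 - 1)))) (w t x) :=
      ((Real.hasDerivAt_rpow_const (Or.inl (hne x))).const_mul r).const_mul _
    have hexp : HasDerivAt (fun τ => Real.exp (lam * (τ - t₀)))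
        (Real.exp (lam * (t - t₀)) * (lam * 1)) t :=
      (((hasDerivAt_id t).sub_const t₀).const_mul lam).exp
    refine (hexp.mul ((hw.hasDerivAt t ht x).rpow_const (p := r) (Or.inl (hne x)))).congr_deriv ?_
    rw [ellipticOp_comp _ _ hwt (Φ := fun z => Real.exp (lam * (t - t₀)) * z ^ r)
        (Φ' := fun z => Real.exp (lam * (t - t₀)) * (r * z ^ (r - 1))) hΦ hΦ',
      grad_comp (hΦ x) (hwt.differentiable two_ne_zero x)]
    have hwr : w t x ^ r ≠ 0 := (Real.rpow_pos_of_pos (hpos t (Ioc_subset_Icc_self ht) x) r).ne'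
    simp only [Real.rpow_sub_one (hne x), map_smul, LinearMap.smul_apply, smul_eq_mul]
    have hwx := hne x
    field_simp
    ring

theorem exists_touching_point (hG : IsForcedSolution Q b c s T F w)
    (hD : IsForcedSolution Q b c s T F' w')
    (hQ : ∀ t ∈ Ioc s T, ∀ x, (Matrix.of (Q t x)).PosSemidef)
    (hpos : ∀ t ∈ Icc s T, ∀ x, 0 < w' t x) (hinit : ∀ x, w s x ≤ w' s x) {ρ : ℝ}
    (hfar : ∀ t ∈ Icc s T, ∀ x : Euc d, ρ ≤ ‖x‖ → w t x ≤ w' t x)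
    {t₁ : ℝ} (ht₁ : t₁ ∈ Icc s T) {x₁ : Euc d} (hbad : w' t₁ x₁ < w t₁ x₁) :
    ∃ R > 1, ∃ t ∈ Ioc s T, ∃ x, ‖x‖ ≤ ρ ∧ w t x = R * w' t x ∧
      grad (w t) x = R • grad (w' t) x ∧ R * F' t x ≤ F t x := by
  obtain ⟨R, hR, t, ht, x, hx, htouch, hle⟩ :=
    _root_.exists_touching_point hG.continuousOn hD.continuousOn hpos hinit hfar ht₁ hbad
  have hH := (hD.const_mul R).add (hG.const_mul (-1))
  have hH0 : R * w' t x + -1 * w t x = 0 := by rw [htouch]; ring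
  have hHnonneg (τ : ℝ) (hτ : τ ∈ Icc s T) (y : Euc d) : 0 ≤ R * w' τ y + -1 * w τ y := by
    linarith [hle τ hτ y]
  have hspace : IsLocalMin (fun y => R * w' t y + -1 * w t y) x :=
    Filter.Eventually.of_forall fun y => hH0.trans_le (hHnonneg t (Ioc_subset_Icc_self ht) y)
  have htime := nonpos_of_hasDerivAt_of_isMinOn_Icc ht.1 (hH.hasDerivAt t ht x)
    fun τ hτ => hH0.trans_le (hHnonneg τ ⟨hτ.1, hτ.2.trans ht.2⟩ x)
  have hell := ellipticOp_nonneg_of_isLocalMin (b t x) (hQ t ht x) (hH.contDiff t ht) hspace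
  have hgrad := grad_eq_zero_of_isLocalMin hspace
  have hdG := (hG.contDiff t ht).differentiable two_ne_zero x
  have hdD := (hD.contDiff t ht).differentiable two_ne_zero x
  rw [grad_add (hdD.const_mul R) (hdG.const_mul (-1)), grad_const_mul hdD, grad_const_mul hdG,
    neg_one_smul, add_neg_eq_zero] at hgrad
  refine ⟨R, hR, t, ht, x, hx, htouch, hgrad.symm, ?_⟩
  rw [hH0] at htime
  linarith

theorem nonneg {W : ℝ → Euc d → ℝ} (hw : IsForcedSolution Q b c s T (fun _ _ => 0) w)
    (hW : IsCoerciveSupersolution Q b c s T W)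
    (hQ : ∀ t ∈ Ioc s T, ∀ x, (Matrix.of (Q t x)).PosSemidef) (hinit : ∀ x, 0 ≤ w s x) {B : ℝ}
    (hB : ∀ t ∈ Icc s T, ∀ x, -B ≤ w t x) : ∀ t ∈ Icc s T, ∀ x, 0 ≤ w t x := by
  obtain ⟨F, hF, hFpos⟩ := hW.exists_forcing
  have hneg : ∀ ε > 0, ∀ t ∈ Icc s T, ∀ x, -1 * w t x ≤ ε * W t x := by
    intro ε hε t₁ ht₁ x₁
    by_contra! hbad
    obtain ⟨ρ, hρ⟩ := hW.coercive (B / ε)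
    obtain ⟨R, hR, t, ht, x, -, -, -, hle⟩ := (hw.const_mul (-1)).exists_touching_point
      (hF.const_mul ε) hQ (fun t ht x => mul_pos hε (hW.pos t ht x))
      (fun x => by
        have hs : s ∈ Icc s T := ⟨le_rfl, ht₁.1.trans ht₁.2⟩
        linarith [hinit x, mul_pos hε (hW.pos s hs x)])
      (fun t ht x hx => by linarith [hB t ht x, (div_le_iff₀' hε).1 (hρ t ht x hx)]) ht₁ hbad
    have hpos : 0 < R * (ε * F t x) := mul_pos (by linarith) (mul_pos hε (hFpos t ht x))
    linarith
  refine fun t ht x => le_of_forall_pos_le_add fun δ hδ => ?_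
  have h := hneg (δ / W t x) (div_pos hδ (hW.pos t ht x)) t ht x
  rw [div_mul_cancel₀ _ (hW.pos t ht x).ne'] at h
  linarith

end IsForcedSolution

theorem IsCoerciveSupersolution.add_const_mul {V W : ℝ → Euc d → ℝ}
    (hW : IsCoerciveSupersolution Q b c s T W)
    (hV : IsForcedSolution Q b c s T (fun _ _ => 0) V) (hV0 : ∀ t ∈ Icc s T, ∀ x, 0 ≤ V t x)
    {η : ℝ} (hη : 0 < η) :
    IsCoerciveSupersolution Q b c s T (fun t x => V t x + η * W t x) where
  exists_forcing := by
    obtain ⟨F, hF, hFpos⟩ := hW.exists_forcing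
    refine ⟨_, hV.add (hF.const_mul η), fun t ht x => ?_⟩
    simpa using mul_pos hη (hFpos t ht x)
  pos t ht x := add_pos_of_nonneg_of_pos (hV0 t ht x) (mul_pos hη (hW.pos t ht x))
  coercive B := by
    obtain ⟨ρ, hρ⟩ := hW.coercive (B / η)
    exact ⟨ρ, fun t ht x hx => by linarith [hV0 t ht x, (div_le_iff₀' hη).1 (hρ t ht x hx)]⟩

end ForcedSolutions

section BernsteinMaximumPrinciple

variable {d : ℕ} {Q : ℝ → Euc d → Fin d → Fin d → ℝ} {b : ℝ → Euc d → Fin d → ℝ}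
  {c : ℝ → Euc d → ℝ} {s T : ℝ}

theorem IsForcedSolution.mono {F w : ℝ → Euc d → ℝ} {s' : ℝ}
    (hw : IsForcedSolution Q b c s T F w) (hs : s ≤ s') : IsForcedSolution Q b c s' T F w where
  continuousOn := hw.continuousOn.mono (prod_mono (Icc_subset_Icc_left hs) le_rfl)
  contDiff t ht := hw.contDiff t (Ioc_subset_Ioc_left hs ht)
  hasDerivAt t ht := hw.hasDerivAt t (Ioc_subset_Ioc_left hs ht)

namespace IsCoerciveSupersolution

variable {V : ℝ → Euc d → ℝ}

theorem mono {s' : ℝ} (hV : IsCoerciveSupersolution Q b c s T V) (hs : s ≤ s') :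
    IsCoerciveSupersolution Q b c s' T V where
  exists_forcing := by
    obtain ⟨F, hF, hFpos⟩ := hV.exists_forcing
    exact ⟨F, hF.mono hs, fun t ht => hFpos t (Ioc_subset_Ioc_left hs ht)⟩
  pos t ht := hV.pos t (Icc_subset_Icc_left hs ht)
  coercive B := by
    obtain ⟨ρ, hρ⟩ := hV.coercive B
    exact ⟨ρ, fun t ht => hρ t (Icc_subset_Icc_left hs ht)⟩

theorem exists_le_exp_mul_rpow (hV : IsCoerciveSupersolution Q b c s T V) {lam t₀ r : ℝ}
    (hlam : 0 ≤ lam) (ht₀ : t₀ ≤ s) (hr : 0 < r) (B : ℝ) :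
    ∃ ρ, ∀ t ∈ Icc s T, ∀ x : Euc d, ρ ≤ ‖x‖ → B ≤ Real.exp (lam * (t - t₀)) * V t x ^ r := by
  obtain ⟨ρ, hρ⟩ := hV.coercive (|B| ^ r⁻¹)
  refine ⟨ρ, fun t ht x hx => ?_⟩
  have hexp : 1 ≤ Real.exp (lam * (t - t₀)) :=
    Real.one_le_exp (mul_nonneg hlam (by linarith [ht.1]))
  calc B ≤ |B| := le_abs_self B
    _ = (|B| ^ r⁻¹) ^ r := (Real.rpow_inv_rpow (abs_nonneg B) hr.ne').symm
    _ ≤ V t x ^ r := Real.rpow_le_rpow (by positivity) (hρ t ht x hx) hr.le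
    _ ≤ _ := le_mul_of_one_le_left (Real.rpow_nonneg (hV.pos t ht x).le r) hexp

end IsCoerciveSupersolution

theorem exists_one_le_add_const {φ : Euc d → ℝ} (hφ : Continuous φ)
    (hcoercive : ∀ B, ∃ R, ∀ x : Euc d, R ≤ ‖x‖ → B ≤ φ x) : ∃ K ≥ 0, ∀ x, 1 ≤ φ x + K := by
  obtain ⟨R, hR⟩ := hcoercive 1
  obtain ⟨B, hB⟩ := (isCompact_closedBall (0 : Euc d) R).exists_bound_of_continuousOn
    hφ.continuousOn
  refine ⟨|B| + 1, by positivity, fun x => ?_⟩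
  rcases le_total R ‖x‖ with hx | hx
  · linarith [hR x hx, abs_nonneg B]
  · linarith [neg_le_of_abs_le (hB x (mem_closedBall_zero_iff.2 hx)), le_abs_self B]

/-- Adding a constant `K` to the Lyapunov function makes it at least `1`, and then its image under
the operator is at most a multiple `M` of it: `e^{M(t - s)}(φ + K)` is a supersolution. -/
theorem exists_isCoerciveSupersolution {φ : Euc d → ℝ} (hφ : ContDiff ℝ 2 φ)
    (hcoercive : ∀ B, ∃ R, ∀ x : Euc d, R ≤ ‖x‖ → B ≤ φ x) {c₁ MJ : ℝ} (hc₁ : 0 ≤ c₁)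
    (hc : ∀ t ∈ Icc s T, ∀ x, c t x ≤ c₁) (hMJ : 0 ≤ MJ)
    (hA : ∀ t ∈ Icc s T, ∀ x, ellipticOp (Q t x) (b t x) φ x + c t x * φ x ≤ MJ) :
    ∃ W, IsCoerciveSupersolution Q b c s T W := by
  obtain ⟨K, hK, hone⟩ := exists_one_le_add_const hφ.continuous hcoercive
  set M := MJ + c₁ * K + 1
  have hM : 0 ≤ M := by positivity
  have hψ : ContDiff ℝ 2 fun x => φ x + K := hφ.add contDiff_const
  have hconst (q : Fin d → Fin d → ℝ) (β : Fin d → ℝ) (x : Euc d) :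
      ellipticOp q β (fun _ => K) x = 0 := by simp [ellipticOp, grad, hess]
  refine ⟨fun t x => Real.exp (M * (t - s)) * (φ x + K), ?_, ?_, fun B => ?_⟩
  · refine ⟨fun t x => Real.exp (M * (t - s))
      * (M * (φ x + K) - (ellipticOp (Q t x) (b t x) φ x + c t x * (φ x + K))),
      ⟨(Continuous.continuousOn (by have := hφ.continuous; fun_prop)),
        fun t _ => contDiff_const.mul hψ, fun t _ x => ?_⟩, fun t ht x => ?_⟩
    · have hexp : HasDerivAt (fun τ => Real.exp (M * (τ - s)))
          (Real.exp (M * (t - s)) * (M * 1)) t :=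
        (((hasDerivAt_id t).sub_const s).const_mul M).exp
      refine (hexp.mul_const (φ x + K)).congr_deriv ?_
      rw [ellipticOp_const_mul _ _ hψ, ellipticOp_add _ _ hφ contDiff_const, hconst]
      ring
    · have ht' := Ioc_subset_Icc_self ht
      refine mul_pos (Real.exp_pos _) ?_
      linarith [hA t ht' x, mul_le_mul_of_nonneg_right (hc t ht' x) hK,
        le_mul_of_one_le_right hM (hone x)]
  · exact fun t _ x => mul_pos (Real.exp_pos _) (by linarith [hone x])
  · obtain ⟨R, hR⟩ := hcoercive B
    refine ⟨R, fun t ht x hx => ?_⟩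
    have hexp : 1 ≤ Real.exp (M * (t - s)) :=
      Real.one_le_exp (mul_nonneg hM (by linarith [ht.1]))
    linarith [hR x hx, le_mul_of_one_le_left (by linarith [hone x] : 0 ≤ φ x + K) hexp]

theorem sub_one_div_mul_le {r μ y E : ℝ} (hr : 0 < r) (hμ : μ ≤ 2) (hμr : μ ≤ 4 / r - 2)
    (hy : 0 ≤ y) (hyE : y ≤ 4 * E) : (r - 1) / r * y ≤ (2 - μ) * E := by
  rcases le_or_gt r 1 with h1 | h1
  · exact (mul_nonpos_of_nonpos_of_nonneg
      (div_nonpos_of_nonpos_of_nonneg (by linarith) hr.le) hy).trans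
      (mul_nonneg (by linarith) (by linarith))
  · have hcoef : (r - 1) / r * 4 = 4 - 4 / r := by field_simp
    calc (r - 1) / r * y ≤ (r - 1) / r * (4 * E) :=
          mul_le_mul_of_nonneg_left hyE (div_nonneg (by linarith) hr.le)
      _ = (4 - 4 / r) * E := by rw [← mul_assoc, hcoef]
      _ ≤ (2 - μ) * E := mul_le_mul_of_nonneg_right (by linarith) (by linarith)

section Family

variable {ι : Type*} [Fintype ι]

theorem bilin_grad_sum_mul_sq_le {q : Fin d → Fin d → ℝ} (hq : (Matrix.of q).PosSemidef)
    {a : ι → ℝ} (ha : ∀ k, 0 ≤ a k) {g : ι → Euc d → ℝ} {x : Euc d}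
    (hg : ∀ k, DifferentiableAt ℝ (g k) x) :
    bilin q (grad (fun y => ∑ k, a k * g k y ^ 2) x) (grad (fun y => ∑ k, a k * g k y ^ 2) x)
      ≤ 4 * ((∑ k, a k * g k x ^ 2) * ∑ k, a k * bilin q (grad (g k) x) (grad (g k) x)) := by
  have hsq (k : ι) :
      grad (fun y => a k * g k y ^ 2) x = (2 : ℝ) • (a k * g k x) • grad (g k) x := by
    have hΦ : HasDerivAt (fun z : ℝ => a k * z ^ 2) (2 * (a k * g k x)) (g k x) :=
      ((hasDerivAt_pow 2 (g k x)).const_mul (a k)).congr_deriv (by norm_num; ring)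
    rw [grad_comp hΦ (hg k), mul_smul]
  rw [grad_sum fun k => ((hg k).fun_pow 2).const_mul (a k)]
  simp only [hsq, ← Finset.smul_sum, map_smul, LinearMap.smul_apply, smul_eq_mul]
  linarith [bilin_sum_smul_le hq ha (fun k => g k x) fun k => grad (g k) x]

/-- At a touching point of `G = ∑ aₖ gₖ²` and `D = e^{λ(t - t₀)} V^r`, the gradients of `G` and `D`
are proportional, so that the term `⟨Q∇D, ∇D⟩ / D` of the equation for `D` is controlled by
`⟨Q∇G, ∇G⟩ / G ≤ 4 ∑ aₖ⟨Q∇gₖ, ∇gₖ⟩`. A fraction `μ` of the good term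
`2 ∑ aₖ⟨Q∇gₖ, ∇gₖ⟩` survives, since `r < 2`. -/
theorem exists_lt_and_mul_le_of_lt {F g : ι → ℝ → Euc d → ℝ}
    (hg : ∀ k, IsForcedSolution Q b c s T (F k) (g k))
    (hQ : ∀ t ∈ Ioc s T, ∀ x, (Matrix.of (Q t x)).PosSemidef) {a a' : ι → ℝ → ℝ}
    (ha : ∀ k t, HasDerivAt (a k) (a' k t) t) (ha0 : ∀ k, ∀ t ∈ Icc s T, 0 ≤ a k t)
    {V : ℝ → Euc d → ℝ} (hV : IsCoerciveSupersolution Q b c s T V) {lam t₀ r μ : ℝ} (hr : 0 < r)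
    (hμ : μ ≤ 2) (hμr : μ ≤ 4 / r - 2)
    (hinit : ∀ x, ∑ k, a k s * g k s x ^ 2 ≤ Real.exp (lam * (s - t₀)) * V s x ^ r) {ρ : ℝ}
    (hfar : ∀ t ∈ Icc s T, ∀ x : Euc d, ρ ≤ ‖x‖ →
      ∑ k, a k t * g k t x ^ 2 ≤ Real.exp (lam * (t - t₀)) * V t x ^ r)
    {t₁ : ℝ} (ht₁ : t₁ ∈ Icc s T) {x₁ : Euc d}
    (hbad : Real.exp (lam * (t₁ - t₀)) * V t₁ x₁ ^ r < ∑ k, a k t₁ * g k t₁ x₁ ^ 2) :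
    ∃ t ∈ Ioc s T, ∃ x, ‖x‖ ≤ ρ ∧
      Real.exp (lam * (t - t₀)) * V t x ^ r < ∑ k, a k t * g k t x ^ 2 ∧
      (lam - (2 - r) * c t x) * ∑ k, a k t * g k t x ^ 2
        ≤ ∑ k, (a' k t * g k t x ^ 2 + 2 * (a k t * g k t x * F k t x))
          - μ * ∑ k, a k t * bilin (Q t x) (grad (g k t) x) (grad (g k t) x) := by
  obtain ⟨FV, hFV, hFVpos⟩ := hV.exists_forcing
  have hDpos (t : ℝ) (ht : t ∈ Icc s T) (x : Euc d) : 0 < Real.exp (lam * (t - t₀)) * V t x ^ r :=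
    mul_pos (Real.exp_pos _) (Real.rpow_pos_of_pos (hV.pos t ht x) r)
  obtain ⟨R, hR, t, ht, x, hx, htouch, hgrad, hle⟩ :=
    (IsForcedSolution.sum_mul_sq hg hQ ha).exists_touching_point
      (hFV.rpow_mul_exp hV.pos lam t₀ r) hQ hDpos hinit hfar ht₁ hbad
  have ht' := Ioc_subset_Icc_self ht
  have hD := hDpos t ht' x
  have hcs := bilin_grad_sum_mul_sq_le (hQ t ht x) (fun k => ha0 k t ht')
    fun k => ((hg k).contDiff t ht).differentiable two_ne_zero x
  have hgood : 0 ≤ r * FV t x / V t x :=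
    (div_pos (mul_pos hr (hFVpos t ht x)) (hV.pos t ht' x)).le
  have hlt : Real.exp (lam * (t - t₀)) * V t x ^ r < ∑ k, a k t * g k t x ^ 2 := by
    rw [htouch]; exact lt_mul_of_one_lt_left hD hR
  refine ⟨t, ht, x, hx, hlt, ?_⟩
  set D := Real.exp (lam * (t - t₀)) * V t x ^ r
  set Γ := bilin (Q t x) (grad (fun y => Real.exp (lam * (t - t₀)) * V t y ^ r) x)
    (grad (fun y => Real.exp (lam * (t - t₀)) * V t y ^ r) x)
  set G := ∑ k, a k t * g k t x ^ 2
  set E := ∑ k, a k t * bilin (Q t x) (grad (g k t) x) (grad (g k t) x)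
  have hquot : R * (Γ / D) ≤ 4 * E := by
    rw [hgrad, map_smul, map_smul, LinearMap.smul_apply, smul_eq_mul, smul_eq_mul, htouch] at hcs
    rw [← mul_div_assoc, div_le_iff₀ hD]
    exact le_of_mul_le_mul_left (hcs.trans_eq (by ring)) (zero_lt_one.trans hR)
  have hmain := sub_one_div_mul_le hr hμ hμr (mul_nonneg (by linarith)
    (div_nonneg (bilin_self_nonneg (hQ t ht x) _) hD.le)) hquot
  have hexpand : R * ((lam + (r - 1) * c t x + r * FV t x / V t x) * D - (r - 1) / r * (Γ / D))
      = (lam + (r - 1) * c t x) * G + r * FV t x / V t x * G - (r - 1) / r * (R * (Γ / D)) := by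
    rw [htouch]; ring
  rw [hexpand] at hle
  linarith [mul_nonneg hgood (hD.trans hlt).le]

end Family

end BernsteinMaximumPrinciple

section DifferenceQuotients

variable {d : ℕ} {J : Set ℝ}

/-- `f(t, ·)` is differentiable for `t ∈ J`, and `f` and its spatial gradient are jointly
continuous on `J × ℝ^d`. -/
structure IsSpatiallyC1On (f : ℝ → Euc d → ℝ) (J : Set ℝ) : Prop where
  differentiable : ∀ t ∈ J, Differentiable ℝ (f t)
  continuousOn : ContinuousOn (fun p : ℝ × Euc d => f p.1 p.2) (J ×ˢ univ)
  continuousOn_grad : ∀ k, ContinuousOn (fun p : ℝ × Euc d => grad (f p.1) p.2 k) (J ×ˢ univ)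

/-- The difference quotient `(f(x + h eₖ) - f(x)) / h`, extended by the partial derivative
`∂ₖf(x)` at `h = 0`. -/
def diffQuot (f : Euc d → ℝ) (h : ℝ) (k : Fin d) (x : Euc d) : ℝ :=
  dslope (fun σ => f (x + σ • EuclideanSpace.single k 1)) 0 h

/-- The commutator at `x` of the difference quotient in direction `eₖ` with the operator
`Tr(q D²f) + ⟨β, ∇f⟩ + γ f`. -/
def diffCommutator (q : Euc d → Fin d → Fin d → ℝ) (β : Euc d → Fin d → ℝ) (γ f : Euc d → ℝ) (h : ℝ)
    (k : Fin d) (x : Euc d) : ℝ :=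
  (∑ i, ∑ j, diffQuot (fun y => q y i j) h k x
      * hess d f (x + h • EuclideanSpace.single k 1) i j)
    + (∑ i, diffQuot (fun y => β y i) h k x * grad f (x + h • EuclideanSpace.single k 1) i)
    + diffQuot γ h k x * f (x + h • EuclideanSpace.single k 1)

theorem diffQuot_of_ne (f : Euc d → ℝ) {h : ℝ} (hh : h ≠ 0) (k : Fin d) (x : Euc d) :
    diffQuot f h k x = h⁻¹ * (f (x + h • EuclideanSpace.single k 1) - f x) := by
  simp [diffQuot, dslope_of_ne _ hh, slope_def_field, div_eq_inv_mul]

theorem diffQuot_zero {f : Euc d → ℝ} {x : Euc d} (hf : DifferentiableAt ℝ f x) (k : Fin d) :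
    diffQuot f 0 k x = grad f x k := by
  rw [diffQuot, dslope_same]
  exact (hf.hasFDerivAt.hasLineDerivAt _).lineDeriv

theorem diffQuot_eq_integral {f : Euc d → ℝ} (hf : Differentiable ℝ f) {k : Fin d}
    (hcont : Continuous fun y => grad f y k) (h : ℝ) (x : Euc d) :
    diffQuot f h k x = ∫ σ in (0 : ℝ)..1, grad f (x + (σ * h) • EuclideanSpace.single k 1) k := by
  rcases eq_or_ne h 0 with rfl | hh
  · simp [diffQuot_zero (hf x)]
  have hline (σ : ℝ) : HasDerivAt
      (fun σ : ℝ => h⁻¹ * f (x + (σ * h) • EuclideanSpace.single k 1))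
      (grad f (x + (σ * h) • EuclideanSpace.single k 1) k) σ := by
    have hinner : HasDerivAt (fun σ : ℝ => x + (σ * h) • EuclideanSpace.single k (1 : ℝ))
        (h • EuclideanSpace.single k (1 : ℝ)) σ := by
      simpa using (((hasDerivAt_id σ).mul_const h).smul_const
        (EuclideanSpace.single k (1 : ℝ))).const_add x
    refine (((hf _).hasFDerivAt.comp_hasDerivAt σ hinner).const_mul h⁻¹).congr_deriv ?_
    rw [map_smul, smul_eq_mul, inv_mul_cancel_left₀ hh, grad]
  rw [intervalIntegral.integral_eq_sub_of_hasDerivAt (fun σ _ => hline σ)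
    (Continuous.intervalIntegrable (by fun_prop) _ _), diffQuot_of_ne f hh]
  simp [mul_sub]

theorem IsSpatiallyC1On.mono {f : ℝ → Euc d → ℝ} (hf : IsSpatiallyC1On f J) {J' : Set ℝ}
    (hJ : J' ⊆ J) : IsSpatiallyC1On f J' where
  differentiable t ht := hf.differentiable t (hJ ht)
  continuousOn := hf.continuousOn.mono (prod_mono hJ le_rfl)
  continuousOn_grad k := (hf.continuousOn_grad k).mono (prod_mono hJ le_rfl)

theorem IsSpatiallyC1On.continuousOn_diffQuot {f : ℝ → Euc d → ℝ} (hf : IsSpatiallyC1On f J)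
    (k : Fin d) : ContinuousOn (fun p : ℝ × ℝ × Euc d => diffQuot (f p.2.1) p.1 k p.2.2)
      (univ ×ˢ J ×ˢ univ) := by
  have hint : ∀ p ∈ (univ ×ˢ J ×ˢ univ : Set (ℝ × ℝ × Euc d)),
      diffQuot (f p.2.1) p.1 k p.2.2
        = ∫ σ in (0 : ℝ)..1, grad (f p.2.1) (p.2.2 + (σ * p.1) • EuclideanSpace.single k 1) k :=
    fun p hp => diffQuot_eq_integral (hf.differentiable _ hp.2.1)
      ((hf.continuousOn_grad k).comp_continuous (Continuous.prodMk_right p.2.1)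
        fun y => ⟨hp.2.1, mem_univ y⟩) _ _
  refine ContinuousOn.congr ?_ hint
  rw [continuousOn_iff_continuous_domRestrict]
  exact intervalIntegral.continuous_parametric_intervalIntegral_of_continuous'
    (f := fun (z : (univ ×ˢ J ×ˢ univ : Set (ℝ × ℝ × Euc d))) σ =>
      grad (f z.1.2.1) (z.1.2.2 + (σ * z.1.1) • EuclideanSpace.single k 1) k)
    ((hf.continuousOn_grad k).comp_continuous
      (f := fun z : (univ ×ˢ J ×ˢ univ : Set (ℝ × ℝ × Euc d)) × ℝ =>
      (z.1.1.2.1, z.1.1.2.2 + (z.2 * z.1.1.1) • EuclideanSpace.single k 1)) (by fun_prop)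
      fun z => ⟨z.1.2.2.1, mem_univ _⟩) 0 1

theorem diffQuot_eq (f : Euc d → ℝ) {h : ℝ} (hh : h ≠ 0) (k : Fin d) :
    diffQuot f h k = fun x => h⁻¹ * (f (x + h • EuclideanSpace.single k 1) + -1 * f x) := by
  funext x
  rw [diffQuot_of_ne f hh, neg_one_mul, sub_eq_add_neg]

theorem contDiff_diffQuot {f : Euc d → ℝ} {n : WithTop ℕ∞} (hf : ContDiff ℝ n f) {h : ℝ}
    (hh : h ≠ 0) (k : Fin d) : ContDiff ℝ n (diffQuot f h k) := by
  rw [diffQuot_eq f hh]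
  fun_prop

theorem grad_diffQuot {f : Euc d → ℝ} (hf : Differentiable ℝ f) {h : ℝ} (hh : h ≠ 0) (k : Fin d)
    (x : Euc d) : grad (diffQuot f h k) x = fun i => diffQuot (fun y => grad f y i) h k x := by
  have hshift : Differentiable ℝ fun y => f (y + h • EuclideanSpace.single k 1) := by fun_prop
  rw [diffQuot_eq f hh, grad_const_mul ((hshift x).fun_add ((hf x).const_mul _)),
    grad_add (hshift x) ((hf x).const_mul _), grad_const_mul (hf x), grad_comp_add_right]
  funext i
  rw [diffQuot_eq _ hh]
  simp

theorem ellipticOp_diffQuot (q : Fin d → Fin d → ℝ) (β : Fin d → ℝ) {f : Euc d → ℝ}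
    (hf : ContDiff ℝ 2 f) {h : ℝ} (hh : h ≠ 0) (k : Fin d) (x : Euc d) :
    ellipticOp q β (diffQuot f h k) x
      = h⁻¹ * (ellipticOp q β f (x + h • EuclideanSpace.single k 1) - ellipticOp q β f x) := by
  have hshift : ContDiff ℝ 2 fun y => f (y + h • EuclideanSpace.single k 1) := by fun_prop
  rw [diffQuot_eq f hh, ellipticOp_const_mul _ _ (hshift.add (contDiff_const.mul hf)),
    ellipticOp_add _ _ hshift (contDiff_const.mul hf), ellipticOp_const_mul _ _ hf,
    ellipticOp_comp_add_right, neg_one_mul, sub_eq_add_neg]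

theorem diffCommutator_of_ne (q : Euc d → Fin d → Fin d → ℝ) (β : Euc d → Fin d → ℝ)
    (γ f : Euc d → ℝ) {h : ℝ} (hh : h ≠ 0) (k : Fin d) (x : Euc d) :
    diffCommutator q β γ f h k x
      = h⁻¹ * (ellipticOp (q (x + h • EuclideanSpace.single k 1))
            (β (x + h • EuclideanSpace.single k 1)) f (x + h • EuclideanSpace.single k 1)
          + γ (x + h • EuclideanSpace.single k 1) * f (x + h • EuclideanSpace.single k 1)
          - (ellipticOp (q x) (β x) f (x + h • EuclideanSpace.single k 1)
            + γ x * f (x + h • EuclideanSpace.single k 1))) := by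
  simp only [diffCommutator, ellipticOp, diffQuot_of_ne _ hh, mul_sub, sub_mul, mul_add, mul_assoc,
    Finset.sum_sub_distrib, Finset.mul_sum]
  ring

theorem IsForcedSolution.map_diffQuot {Q : ℝ → Euc d → Fin d → Fin d → ℝ}
    {b : ℝ → Euc d → Fin d → ℝ} {c : ℝ → Euc d → ℝ} {s T : ℝ} {u : ℝ → Euc d → ℝ}
    (hu : IsForcedSolution Q b c s T (fun _ _ => 0) u) {h : ℝ} (hh : h ≠ 0) (k : Fin d) :
    IsForcedSolution Q b c s T (fun t => diffCommutator (Q t) (b t) (c t) (u t) h k)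
      (fun t => diffQuot (u t) h k) where
  continuousOn := by
    simp only [diffQuot_of_ne _ hh]
    refine continuousOn_const.mul (ContinuousOn.sub ?_ hu.continuousOn)
    exact hu.continuousOn.comp (f := fun p : ℝ × Euc d =>
      (p.1, p.2 + h • EuclideanSpace.single k 1)) (by fun_prop) fun p hp => ⟨hp.1, mem_univ _⟩
  contDiff t ht := contDiff_diffQuot (hu.contDiff t ht) hh k
  hasDerivAt t ht x := by
    simp only [diffQuot_of_ne _ hh]
    refine (((hu.hasDerivAt t ht _).sub (hu.hasDerivAt t ht x)).const_mul h⁻¹).congr_deriv ?_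
    rw [ellipticOp_diffQuot _ _ (hu.contDiff t ht) hh, diffCommutator_of_ne _ _ _ _ hh]
    ring

end DifferenceQuotients

section Remainder

variable {d : ℕ}

/-- The first-order Bernstein conditions on the coefficients `q, β, γ` at the point `x`, where `ν`
is a lower bound for the ellipticity: the last field combines the one-sided bound on the Jacobian
of the drift with the bound on the gradient of the potential. -/
structure IsBernsteinAt (q : Euc d → Fin d → Fin d → ℝ) (β : Euc d → Fin d → ℝ) (γ : Euc d → ℝ)
    (ν Λ L M : ℝ) (x : Euc d) : Prop where
  elliptic : ∀ ξ, ν * ∑ i, ξ i ^ 2 ≤ bilin (q x) ξ ξ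
  abs_grad_le : ∀ i j k, |grad (fun y => q y i j) x k| ≤ Λ * ν
  dissipative : ∀ ξ : Fin d → ℝ, ∑ k, ξ k * ∑ i, grad (fun y => β y i) x k * ξ i
    + L * (∑ k, grad γ x k * ξ k) ^ 2 ≤ M * ν * ∑ k, ξ k ^ 2

/-- The bounds, with constant `K` and relative to the ellipticity `ν`, that a cutoff function `θ`
has to satisfy at `x` with respect to the operator `Tr(q D²) + ⟨β, ∇⟩`. -/
structure IsCutoffAt (q : Fin d → Fin d → ℝ) (β : Fin d → ℝ) (ν K : ℝ) (θ : Euc d → ℝ)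
    (x : Euc d) : Prop where
  mem_Icc : θ x ∈ Icc (0 : ℝ) 1
  abs_grad_le : ∀ i, |grad θ x i| ≤ K
  abs_flux_le : ∀ j, |∑ i, q i j * grad θ x i| ≤ K * ν
  neg_le_ellipticOp : -(K * ν) ≤ ellipticOp q β θ x

/-- The quantity `u² + τ ∑ₖ (θ δₖu)²` to which Bernstein's method is applied, where `δₖ` is the
difference quotient with step `h`: difference quotients of a solution can be differentiated twice in
`x`, its gradient cannot. At `h = 0` this is `u² + τ θ² |∇u|²`. -/
def energy (θ u : Euc d → ℝ) (τ h : ℝ) (x : Euc d) : ℝ :=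
  u x ^ 2 + τ * ∑ k, (θ x * diffQuot u h k x) ^ 2

/-- What remains at `x` of the equation for `energy θ u τ h`, where `D_t τ = a`, when the potential
term and all but a fraction `μ` of the good quadratic terms are left out. -/
def remainder (q : Euc d → Fin d → Fin d → ℝ) (β : Euc d → Fin d → ℝ) (γ θ u : Euc d → ℝ)
    (a τ μ h : ℝ) (x : Euc d) : ℝ :=
  ∑ k, (a * (θ x * diffQuot u h k x) ^ 2 + 2 * (τ * (θ x * diffQuot u h k x)
      * (θ x * diffCommutator q β γ u h k x - diffQuot u h k x * ellipticOp (q x) (β x) θ x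
        - 2 * bilin (q x) (grad θ x) fun i => diffQuot (fun y => grad u y i) h k x)))
    - μ * (bilin (q x) (grad u x) (grad u x) + τ * ∑ k,
      bilin (q x) (θ x • (fun i => diffQuot (fun y => grad u y i) h k x)
          + diffQuot u h k x • grad θ x)
        (θ x • (fun i => diffQuot (fun y => grad u y i) h k x) + diffQuot u h k x • grad θ x))

theorem abs_sum_le_card_mul {ι : Type*} [Fintype ι] {f : ι → ℝ} {B : ℝ} (hf : ∀ i, |f i| ≤ B) :
    |∑ i, f i| ≤ Fintype.card ι * B := by
  simpa using norm_sum_le_of_le (f := f) (n := fun _ => B) Finset.univ fun i _ => hf i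

theorem abs_le_sqrt_sum_sq {ι : Type*} [Fintype ι] (ξ : ι → ℝ) (i : ι) :
    |ξ i| ≤ √(∑ j, ξ j ^ 2) :=
  Real.abs_le_sqrt (Finset.single_le_sum (f := fun j => ξ j ^ 2) (fun _ _ => sq_nonneg _)
    (Finset.mem_univ i))

theorem abs_sum_mul_sum_sum_le {p : Fin d → ℝ} {A : Fin d → Fin d → Fin d → ℝ}
    {Z : Fin d → Fin d → ℝ} {σ m z : ℝ} (hσ : 0 ≤ σ) (hm : 0 ≤ m) (hp : ∀ k, |p k| ≤ σ)
    (hA : ∀ k i j, |A k i j| ≤ m) (hZ : ∀ i j, |Z i j| ≤ z) :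
    |∑ k, p k * ∑ i, ∑ j, A k i j * Z i j| ≤ d ^ 3 * (σ * m * z) := by
  have hterm (k i j : Fin d) : |p k * (A k i j * Z i j)| ≤ σ * m * z := by
    rw [abs_mul, abs_mul, ← mul_assoc]
    have := hp k; have := hA k i j; have := hZ i j
    gcongr
  simp only [Finset.mul_sum]
  refine (abs_sum_le_card_mul fun k => abs_sum_le_card_mul fun i =>
    abs_sum_le_card_mul fun j => hterm k i j).trans_eq ?_
  simp only [Fintype.card_fin]
  ring

theorem abs_sum_mul_bilin_le {q : Fin d → Fin d → ℝ} {p η : Fin d → ℝ} {Z : Fin d → Fin d → ℝ}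
    {σ m z : ℝ} (hσ : 0 ≤ σ) (hm : 0 ≤ m) (hp : ∀ k, |p k| ≤ σ)
    (hη : ∀ j, |∑ i, q i j * η i| ≤ m) (hZ : ∀ i j, |Z i j| ≤ z) :
    |∑ k, p k * bilin q η (Z k)| ≤ d ^ 2 * (σ * m * z) := by
  have hterm (k j : Fin d) : |p k * ((∑ i, q i j * η i) * Z k j)| ≤ σ * m * z := by
    rw [abs_mul, abs_mul, ← mul_assoc]
    have := hp k; have := hη j; have := hZ k j
    gcongr
  have hbilin (k : Fin d) :
      p k * bilin q η (Z k) = ∑ j, p k * ((∑ i, q i j * η i) * Z k j) := by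
    rw [bilin_apply, Finset.sum_comm, Finset.mul_sum]
    simp only [Finset.sum_mul]
  simp only [hbilin]
  refine (abs_sum_le_card_mul fun k => abs_sum_le_card_mul fun j => hterm k j).trans_eq ?_
  simp only [Fintype.card_fin]
  ring

variable {q : Euc d → Fin d → Fin d → ℝ} {β : Euc d → Fin d → ℝ} {γ θ u : Euc d → ℝ}
  {ν Λ L M K : ℝ} {x : Euc d}

theorem IsBernsteinAt.drift_add_potential_le (hB : IsBernsteinAt q β γ ν Λ L M x) (hL : 0 < L)
    (ξ : Fin d → ℝ) (w : ℝ) :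
    ∑ k, ξ k * ∑ i, grad (fun y => β y i) x k * ξ i + w * ∑ k, grad γ x k * ξ k
      ≤ M * ν * ∑ k, ξ k ^ 2 + w ^ 2 / (4 * L) := by
  set y := ∑ k, grad γ x k * ξ k
  have hsplit := two_mul_le_add_mul_sq (a := y) (b := w / 2) hL
  linear_combination hB.dissipative ξ + hsplit

theorem diffCommutator_zero (hq : ∀ i j, DifferentiableAt ℝ (fun y => q y i j) x)
    (hβ : ∀ i, DifferentiableAt ℝ (fun y => β y i) x) (hγ : DifferentiableAt ℝ γ x) (k : Fin d) :
    diffCommutator q β γ u 0 k x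
      = ∑ i, ∑ j, grad (fun y => q y i j) x k * hess d u x i j
        + ∑ i, grad (fun y => β y i) x k * grad u x i + grad γ x k * u x := by
  simp only [diffCommutator, diffQuot_zero (hq _ _), diffQuot_zero (hβ _), diffQuot_zero hγ,
    zero_smul, add_zero]

theorem sum_mul_commutator_eq (q : Fin d → Fin d → ℝ) (Dq : Fin d → Fin d → Fin d → ℝ)
    (Dβ H : Fin d → Fin d → ℝ) (Dγ p η : Fin d → ℝ) (w θ₀ A : ℝ) :
    ∑ k, θ₀ * p k * (θ₀ * (∑ i, ∑ j, Dq k i j * H i j + ∑ i, Dβ k i * p i + Dγ k * w)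
        - p k * A - 2 * bilin q η (H k))
      = θ₀ * ∑ k, p k * ∑ i, ∑ j, Dq k i j * (θ₀ * H i j)
        + θ₀ ^ 2 * (∑ k, p k * ∑ i, Dβ k i * p i + w * ∑ k, Dγ k * p k)
        - θ₀ * A * ∑ k, p k ^ 2 - 2 * ∑ k, p k * bilin q η (fun i => θ₀ * H k i) := by
  have hDq (k : Fin d) : ∑ i, ∑ j, Dq k i j * (θ₀ * H i j) = θ₀ * ∑ i, ∑ j, Dq k i j * H i j := by
    simp only [Finset.mul_sum, mul_left_comm]
  have hη (k : Fin d) : bilin q η (fun i => θ₀ * H k i) = θ₀ * bilin q η (H k) :=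
    map_smul (bilin q η) θ₀ (H k)
  simp only [hDq, hη]
  rw [Finset.mul_sum _ _ w, ← Finset.sum_add_distrib, Finset.mul_sum _ _ θ₀,
    Finset.mul_sum _ _ (θ₀ ^ 2), Finset.mul_sum _ _ (θ₀ * A), Finset.mul_sum _ _ (2 : ℝ),
    ← Finset.sum_add_distrib, ← Finset.sum_sub_distrib, ← Finset.sum_sub_distrib]
  exact Finset.sum_congr rfl fun k _ => by ring

theorem IsBernsteinAt.sum_mul_commutator_le (hB : IsBernsteinAt q β γ ν Λ L M x)
    (hθ : IsCutoffAt (q x) (β x) ν K θ x) (hν : 0 ≤ ν) (hΛ : 0 ≤ Λ) (hL : 0 < L) (hM : 0 ≤ M)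
    (hK : 0 ≤ K) (p : Fin d → ℝ) (H : Fin d → Fin d → ℝ) (w : ℝ) {y : ℝ}
    (hy : ∀ i j, |θ x * H i j + p i * grad θ x j| ≤ y) :
    ∑ k, θ x * p k * (θ x * (∑ i, ∑ j, grad (fun y => q y i j) x k * H i j
          + ∑ i, grad (fun y => β y i) x k * p i + grad γ x k * w)
        - p k * ellipticOp (q x) (β x) θ x - 2 * bilin (q x) (grad θ x) (H k))
      ≤ ν * ((d ^ 3 * Λ + 2 * d ^ 2 * K) * (√(∑ k, p k ^ 2) * y)
          + ((d ^ 3 * Λ + 2 * d ^ 2 * K) * K + K + M) * ∑ k, p k ^ 2) + w ^ 2 / (4 * L) := by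
  rw [sum_mul_commutator_eq]
  set S := ∑ k, p k ^ 2
  set t := ∑ k, p k * ∑ i, ∑ j, grad (fun y => q y i j) x k * (θ x * H i j)
  set f := ∑ k, p k * bilin (q x) (grad θ x) fun i => θ x * H k i
  have hS0 : 0 ≤ S := Finset.sum_nonneg fun _ _ => sq_nonneg _
  have hp := abs_le_sqrt_sum_sq p
  have hH (i j : Fin d) : |θ x * H i j| ≤ y + √S * K :=
    calc |θ x * H i j| = |θ x * H i j + p i * grad θ x j - p i * grad θ x j| := by ring_nf
      _ ≤ |θ x * H i j + p i * grad θ x j| + |p i * grad θ x j| := abs_sub _ _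
      _ ≤ y + √S * K := by
        rw [abs_mul (p i)]
        exact add_le_add (hy i j) (mul_le_mul (hp i) (hθ.abs_grad_le j)
          (abs_nonneg _) (by positivity))
  have ht : |t| ≤ d ^ 3 * (√S * (Λ * ν) * (y + √S * K)) :=
    abs_sum_mul_sum_sum_le (by positivity) (by positivity) hp
      (fun k i j => hB.abs_grad_le i j k) hH
  have hf : |f| ≤ d ^ 2 * (√S * (K * ν) * (y + √S * K)) :=
    abs_sum_mul_bilin_le (by positivity) (by positivity) hp hθ.abs_flux_le hH
  obtain ⟨hθ0, hθ1⟩ := hθ.mem_Icc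
  have hθt : θ x * t ≤ |t| :=
    (mul_le_mul_of_nonneg_left (le_abs_self t) hθ0).trans
      (mul_le_of_le_one_left (abs_nonneg t) hθ1)
  have hlower := (mul_le_mul_of_nonneg_left (hB.drift_add_potential_le hL p w)
    (sq_nonneg (θ x))).trans (mul_le_of_le_one_left (by positivity) (pow_le_one₀ hθ0 hθ1))
  have hop : θ x * -ellipticOp (q x) (β x) θ x ≤ K * ν :=
    (mul_le_mul_of_nonneg_left (neg_le.mp hθ.neg_le_ellipticOp) hθ0).trans
      (mul_le_of_le_one_left (by positivity) hθ1)
  have hSsq : √S ^ 2 = S := Real.sq_sqrt hS0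
  linear_combination hθt + ht + 2 * neg_le_abs f + 2 * hf + hlower + hop * S
    + ν * (d ^ 3 * Λ + 2 * d ^ 2 * K) * K * hSsq

theorem remainder_zero (hq : ∀ i j, DifferentiableAt ℝ (fun y => q y i j) x)
    (hβ : ∀ i, DifferentiableAt ℝ (fun y => β y i) x) (hγ : DifferentiableAt ℝ γ x)
    (hu : ContDiff ℝ 2 u) (a τ μ : ℝ) :
    remainder q β γ θ u a τ μ 0 x = a * (θ x ^ 2 * ∑ k, grad u x k ^ 2)
      + 2 * τ * ∑ k, θ x * grad u x k
        * (θ x * (∑ i, ∑ j, grad (fun y => q y i j) x k * hess d u x i j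
          + ∑ i, grad (fun y => β y i) x k * grad u x i + grad γ x k * u x)
        - grad u x k * ellipticOp (q x) (β x) θ x
        - 2 * bilin (q x) (grad θ x) (hess d u x k))
      - μ * (bilin (q x) (grad u x) (grad u x) + τ * ∑ k,
        bilin (q x) (θ x • hess d u x k + grad u x k • grad θ x)
          (θ x • hess d u x k + grad u x k • grad θ x)) := by
  have hdiff (k : Fin d) : diffQuot u 0 k x = grad u x k :=
    diffQuot_zero (hu.differentiable two_ne_zero x) k
  have hdiff' (i k : Fin d) : diffQuot (fun y => grad u y i) 0 k x = hess d u x k i :=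
    diffQuot_zero (differentiable_grad hu i x) k
  simp only [remainder, hdiff, hdiff', diffCommutator_zero hq hβ hγ]
  congr 1
  simp only [Finset.mul_sum, ← Finset.sum_add_distrib]
  exact Finset.sum_congr rfl fun k _ => by ring

/-- The choice of `μ` makes the good quadratic terms absorb everything but the zeroth order term:
the cross term is split by `2 N σ y ≤ μ y² + (N² / μ) σ²`. -/
theorem IsBernsteinAt.remainder_zero_le (hB : IsBernsteinAt q β γ ν Λ L M x)
    (hθ : IsCutoffAt (q x) (β x) ν K θ x) (hΛ : 0 ≤ Λ) (hL : 0 < L) (hM : 0 ≤ M) (hK : 0 ≤ K)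
    {ν₀ : ℝ} (hν₀ : 0 < ν₀) (hν : ν₀ ≤ ν) (hq : ∀ i j, DifferentiableAt ℝ (fun y => q y i j) x)
    (hβ : ∀ i, DifferentiableAt ℝ (fun y => β y i) x) (hγ : DifferentiableAt ℝ γ x)
    (hu : ContDiff ℝ 2 u) {a τ μ : ℝ} (hτ : τ ∈ Icc 0 a) (hμ : 0 < μ)
    (ha : a * (1 / ν₀ + 2 * ((d ^ 3 * Λ + 2 * d ^ 2 * K) * K + K + M)
      + (d ^ 3 * Λ + 2 * d ^ 2 * K) ^ 2 / μ) ≤ μ) :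
    remainder q β γ θ u a τ μ 0 x ≤ a / (2 * L) * u x ^ 2 := by
  set N : ℝ := d ^ 3 * Λ + 2 * d ^ 2 * K
  have hν0 : 0 < ν := hν₀.trans_le hν
  obtain ⟨hτ0, hτa⟩ := hτ
  have ha0 : 0 ≤ a := hτ0.trans hτa
  rw [remainder_zero hq hβ hγ hu]
  set S := ∑ k, grad u x k ^ 2
  set Y : Fin d → Fin d → ℝ := fun k => θ x • hess d u x k + grad u x k • grad θ x
  set T := ∑ k, ∑ i, Y k i ^ 2 with hT
  have hS0 : 0 ≤ S := Finset.sum_nonneg fun _ _ => sq_nonneg _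
  have hY (i j : Fin d) : |θ x * hess d u x i j + grad u x i * grad θ x j| ≤ √T := by
    refine (abs_le_sqrt_sum_sq (Y i) j).trans (Real.sqrt_le_sqrt ?_)
    exact Finset.single_le_sum (f := fun k => ∑ i, Y k i ^ 2)
      (fun _ _ => Finset.sum_nonneg fun _ _ => sq_nonneg _) (Finset.mem_univ i)
  have hcross := hB.sum_mul_commutator_le hθ hν0.le hΛ hL hM hK (grad u x) (hess d u x) (u x) hY
  set X := ∑ k, θ x * grad u x k * (θ x * _ - grad u x k * ellipticOp (q x) (β x) θ x - _)
  have hyoung : 2 * N * (√S * √T) ≤ μ * T + N ^ 2 / μ * S := by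
    have hsplit := two_mul_le_add_mul_sq (a := √T) (b := N * √S) hμ
    rw [mul_pow, Real.sq_sqrt hS0, Real.sq_sqrt (by positivity)] at hsplit
    linear_combination hsplit
  have hgood : ν * (S + τ * T)
      ≤ bilin (q x) (grad u x) (grad u x) + τ * ∑ k, bilin (q x) (Y k) (Y k) := by
    have hsum : ν * T ≤ ∑ k, bilin (q x) (Y k) (Y k) := by
      rw [hT, Finset.mul_sum]
      exact Finset.sum_le_sum fun k _ => hB.elliptic (Y k)
    linarith [hB.elliptic (grad u x), mul_le_mul_of_nonneg_left hsum hτ0]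
  have hS' : θ x ^ 2 * S ≤ 1 / ν₀ * (ν * S) := by
    have hone : 1 ≤ 1 / ν₀ * ν := by rwa [one_div_mul_eq_div, one_le_div hν₀]
    have hθ2 : θ x ^ 2 ≤ 1 := pow_le_one₀ hθ.mem_Icc.1 hθ.mem_Icc.2
    nlinarith
  have hslack : 0 ≤ 2 * (N * K + K + M) * ν * S + N ^ 2 / μ * ν * S + u x ^ 2 / (2 * L) := by
    positivity
  linear_combination a * hS' + 2 * τ * hcross + τ * ν * hyoung + μ * hgood + ν * S * ha
    + mul_le_mul_of_nonneg_right hτa hslack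

end Remainder

section JointContinuity

variable {d : ℕ} {J : Set ℝ}

/-- All coefficients of the operator are spatially `C¹` on `J × ℝ^d`. -/
structure HasSpatiallyC1Coeffs (Q : ℝ → Euc d → Fin d → Fin d → ℝ) (b : ℝ → Euc d → Fin d → ℝ)
    (c : ℝ → Euc d → ℝ) (J : Set ℝ) : Prop where
  diffusion : ∀ i j, IsSpatiallyC1On (fun t x => Q t x i j) J
  drift : ∀ i, IsSpatiallyC1On (fun t x => b t x i) J
  potential : IsSpatiallyC1On c J

theorem HasSpatiallyC1Coeffs.mono {Q : ℝ → Euc d → Fin d → Fin d → ℝ}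
    {b : ℝ → Euc d → Fin d → ℝ} {c : ℝ → Euc d → ℝ} (h : HasSpatiallyC1Coeffs Q b c J)
    {J' : Set ℝ} (hJ : J' ⊆ J) : HasSpatiallyC1Coeffs Q b c J' :=
  ⟨fun i j => (h.diffusion i j).mono hJ, fun i => (h.drift i).mono hJ, h.potential.mono hJ⟩

theorem continuousOn_comp_add_smul {f : ℝ → Euc d → ℝ}
    (hf : ContinuousOn (fun p : ℝ × Euc d => f p.1 p.2) (J ×ˢ univ)) (v : Euc d) :
    ContinuousOn (fun p : ℝ × ℝ × Euc d => f p.2.1 (p.2.2 + p.1 • v)) (univ ×ˢ J ×ˢ univ) :=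
  hf.comp (f := fun p : ℝ × ℝ × Euc d => (p.2.1, p.2.2 + p.1 • v)) (by fun_prop)
    fun _ hp => ⟨hp.2.1, mem_univ _⟩

theorem IsSpatiallyC1On.continuousOn_comp_snd {f : ℝ → Euc d → ℝ} (hf : IsSpatiallyC1On f J) :
    ContinuousOn (fun p : ℝ × ℝ × Euc d => f p.2.1 p.2.2) (univ ×ˢ J ×ˢ univ) :=
  hf.continuousOn.comp continuousOn_snd fun _ hp => hp.2

theorem continuousOn_comp_time {τ : ℝ → ℝ} (hτ : Continuous τ) :
    ContinuousOn (fun p : ℝ × ℝ × Euc d => τ p.2.1) (univ ×ˢ J ×ˢ univ) :=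
  (hτ.comp (continuous_fst.comp continuous_snd)).continuousOn

theorem continuousOn_comp_space {g : Euc d → ℝ} (hg : Continuous g) :
    ContinuousOn (fun p : ℝ × ℝ × Euc d => g p.2.2) (univ ×ˢ J ×ˢ univ) :=
  (hg.comp (continuous_snd.comp continuous_snd)).continuousOn

theorem continuousOn_bilin {X : Type*} [TopologicalSpace X] {S : Set X}
    {q : X → Fin d → Fin d → ℝ} {ξ η : X → Fin d → ℝ}
    (hq : ∀ i j, ContinuousOn (fun p => q p i j) S) (hξ : ∀ i, ContinuousOn (fun p => ξ p i) S)
    (hη : ∀ i, ContinuousOn (fun p => η p i) S) :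
    ContinuousOn (fun p => bilin (q p) (ξ p) (η p)) S := by
  simp only [bilin_apply]
  fun_prop

theorem continuous_hess {θ : Euc d → ℝ} (hθ : ContDiff ℝ 2 θ) (i j : Fin d) :
    Continuous fun x => hess d θ x i j :=
  (((hθ.fderiv_right (m := 1) le_rfl).clm_apply contDiff_const).continuous_fderiv
    one_ne_zero).clm_apply continuous_const

variable {Q : ℝ → Euc d → Fin d → Fin d → ℝ} {b : ℝ → Euc d → Fin d → ℝ} {c : ℝ → Euc d → ℝ}
  {u : ℝ → Euc d → ℝ} {θ : Euc d → ℝ}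

theorem continuousOn_diffCommutator (hcoef : HasSpatiallyC1Coeffs Q b c J)
    (hu : IsSpatiallyC1On u J) (hgrad : ∀ i, IsSpatiallyC1On (fun t x => grad (u t) x i) J)
    (k : Fin d) :
    ContinuousOn (fun p : ℝ × ℝ × Euc d =>
      diffCommutator (Q p.2.1) (b p.2.1) (c p.2.1) (u p.2.1) p.1 k p.2.2) (univ ×ˢ J ×ˢ univ) := by
  have hQ i j := (hcoef.diffusion i j).continuousOn_diffQuot k
  have hb i := (hcoef.drift i).continuousOn_diffQuot k
  have hc := hcoef.potential.continuousOn_diffQuot k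
  have hH i j : ContinuousOn (fun p : ℝ × ℝ × Euc d =>
      hess d (u p.2.1) (p.2.2 + p.1 • EuclideanSpace.single k 1) i j) (univ ×ˢ J ×ˢ univ) :=
    continuousOn_comp_add_smul (f := fun t x => hess d (u t) x i j)
      ((hgrad j).continuousOn_grad i) _
  have hG i := continuousOn_comp_add_smul (f := fun t x => grad (u t) x i)
    (hgrad i).continuousOn (EuclideanSpace.single k 1)
  have hU := continuousOn_comp_add_smul hu.continuousOn (EuclideanSpace.single k 1)
  exact ((continuousOn_finsetSum _ fun i _ => continuousOn_finsetSum _ fun j _ =>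
    (hQ i j).mul (hH i j)).add (continuousOn_finsetSum _ fun i _ => (hb i).mul (hG i))).add
      (hc.mul hU)

theorem continuousOn_energy (hu : IsSpatiallyC1On u J) (hθ : Continuous θ) {τ : ℝ → ℝ}
    (hτ : Continuous τ) :
    ContinuousOn (fun p : ℝ × ℝ × Euc d => energy θ (u p.2.1) (τ p.2.1) p.1 p.2.2)
      (univ ×ˢ J ×ˢ univ) :=
  (hu.continuousOn_comp_snd.pow 2).add ((continuousOn_comp_time hτ).mul
    (continuousOn_finsetSum _ fun k _ =>
      ((continuousOn_comp_space hθ).mul (hu.continuousOn_diffQuot k)).pow 2))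

theorem continuousOn_remainder (hcoef : HasSpatiallyC1Coeffs Q b c J)
    (hu : IsSpatiallyC1On u J) (hgrad : ∀ i, IsSpatiallyC1On (fun t x => grad (u t) x i) J)
    (hθ : ContDiff ℝ 2 θ) (a μ : ℝ) {τ : ℝ → ℝ} (hτ : Continuous τ) :
    ContinuousOn (fun p : ℝ × ℝ × Euc d =>
      remainder (Q p.2.1) (b p.2.1) (c p.2.1) θ (u p.2.1) a (τ p.2.1) μ p.1 p.2.2)
      (univ ×ˢ J ×ˢ univ) := by
  have hQ i j := (hcoef.diffusion i j).continuousOn_comp_snd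
  have hb i := (hcoef.drift i).continuousOn_comp_snd
  have hp := hu.continuousOn_diffQuot
  have hH i := (hgrad i).continuousOn_diffQuot
  have hG i := (hgrad i).continuousOn_comp_snd
  have hK := continuousOn_diffCommutator hcoef hu hgrad
  have hτ' := continuousOn_comp_time (d := d) (J := J) hτ
  have hθ₀ := continuousOn_comp_space (J := J) hθ.continuous
  have hθ₁ i := continuousOn_comp_space (J := J) (differentiable_grad hθ i).continuous
  have hθ₂ i j := continuousOn_comp_space (J := J) (continuous_hess hθ i j)
  have hop : ContinuousOn (fun p : ℝ × ℝ × Euc d =>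
      ellipticOp (Q p.2.1 p.2.2) (b p.2.1 p.2.2) θ p.2.2) (univ ×ˢ J ×ˢ univ) :=
    (continuousOn_finsetSum _ fun i _ => continuousOn_finsetSum _ fun j _ =>
      (hQ i j).mul (hθ₂ i j)).add (continuousOn_finsetSum _ fun i _ => (hb i).mul (hθ₁ i))
  have hcross k := continuousOn_bilin hQ hθ₁ fun i => hH i k
  have hY k i := (hθ₀.mul (hH i k)).add ((hp k).mul (hθ₁ i))
  exact (continuousOn_finsetSum _ fun k _ => (((hθ₀.mul (hp k)).pow 2).const_mul a).add
    (((hτ'.mul (hθ₀.mul (hp k))).mul (((hθ₀.mul (hK k)).sub ((hp k).mul hop)).sub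
      ((hcross k).const_mul 2))).const_mul 2)).sub
    (((continuousOn_bilin hQ hG hG).add (hτ'.mul (continuousOn_finsetSum _ fun k _ =>
      continuousOn_bilin hQ (hY k) (hY k)))).const_mul μ)

end JointContinuity

section EnergyBound

open scoped Topology

variable {d : ℕ} {Q : ℝ → Euc d → Fin d → Fin d → ℝ} {b : ℝ → Euc d → Fin d → ℝ}
  {c : ℝ → Euc d → ℝ} {s T : ℝ} {u V : ℝ → Euc d → ℝ} {θ : Euc d → ℝ}

theorem IsClassicalSolution.isSpatiallyC1On {f : Euc d → ℝ}
    (hu : IsClassicalSolution d Q b c s f u) : IsSpatiallyC1On u (Ioi s) where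
  differentiable t ht := (hu.xdiff t ht).differentiable two_ne_zero
  continuousOn := hu.cont.mono (prod_mono Ioi_subset_Ici_self le_rfl)
  continuousOn_grad _ := hu.grad_cont.clm_apply continuousOn_const

theorem IsClassicalSolution.isSpatiallyC1On_grad {f : Euc d → ℝ}
    (hu : IsClassicalSolution d Q b c s f u) (i : Fin d) :
    IsSpatiallyC1On (fun t x => grad (u t) x i) (Ioi s) where
  differentiable t ht := differentiable_grad (hu.xdiff t ht) i
  continuousOn := hu.grad_cont.clm_apply continuousOn_const
  continuousOn_grad k := continuousOn_pi.1 (continuousOn_pi.1 hu.hess_cont k) i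

theorem grad_mul_diffQuot {w : Euc d → ℝ} (hw : ContDiff ℝ 2 w) (hθ : Differentiable ℝ θ) {h : ℝ}
    (hh : h ≠ 0) (k : Fin d) (x : Euc d) :
    grad (fun y => θ y * diffQuot w h k y) x
      = (θ x • fun i => diffQuot (fun y => grad w y i) h k x) + diffQuot w h k x • grad θ x := by
  rw [grad_mul (hθ x) ((contDiff_diffQuot hw hh k).differentiable two_ne_zero x),
    grad_diffQuot (hw.differentiable two_ne_zero) hh]

theorem exists_lt_and_mul_le_remainder_of_lt (hu : IsForcedSolution Q b c s T (fun _ _ => 0) u)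
    (hQ : ∀ t ∈ Ioc s T, ∀ x, (Matrix.of (Q t x)).PosSemidef)
    (hV : IsCoerciveSupersolution Q b c s T V) (hθ : ContDiff ℝ 2 θ) {lam t₀ r μ a : ℝ}
    (hr : 0 < r) (hμ : μ ≤ 2) (hμr : μ ≤ 4 / r - 2) (ha : 0 ≤ a) {h : ℝ} (hh : h ≠ 0)
    (hinit : ∀ x, u s x ^ 2 ≤ Real.exp (lam * (s - t₀)) * V s x ^ r) {ρ : ℝ}
    (hfar : ∀ t ∈ Icc s T, ∀ x : Euc d, ρ ≤ ‖x‖ →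
      energy θ (u t) (a * (t - s)) h x ≤ Real.exp (lam * (t - t₀)) * V t x ^ r)
    {t₁ : ℝ} (ht₁ : t₁ ∈ Icc s T) {x₁ : Euc d}
    (hbad : Real.exp (lam * (t₁ - t₀)) * V t₁ x₁ ^ r < energy θ (u t₁) (a * (t₁ - s)) h x₁) :
    ∃ t ∈ Ioc s T, ∃ x, ‖x‖ ≤ ρ ∧
      Real.exp (lam * (t - t₀)) * V t x ^ r < energy θ (u t) (a * (t - s)) h x ∧
      (lam - (2 - r) * c t x) * energy θ (u t) (a * (t - s)) h x
        ≤ remainder (Q t) (b t) (c t) θ (u t) a (a * (t - s)) μ h x := by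
  set A : Option (Fin d) → ℝ → ℝ := fun k t => k.elim 1 fun _ => a * (t - s)
  set g : Option (Fin d) → ℝ → Euc d → ℝ := fun k => k.elim u fun k t x =>
    θ x * diffQuot (u t) h k x
  have hg (k : Option (Fin d)) : IsForcedSolution Q b c s T (k.elim (fun _ _ => 0) fun k t x =>
      θ x * diffCommutator (Q t) (b t) (c t) (u t) h k x
        - diffQuot (u t) h k x * ellipticOp (Q t x) (b t x) θ x
        - 2 * bilin (Q t x) (grad θ x) (grad (diffQuot (u t) h k) x)) (g k) := by
    rcases k with _ | k
    · exact hu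
    · exact (hu.map_diffQuot hh k).mul_left hQ hθ
  have hA : ∀ k t, HasDerivAt (A k) (k.elim 0 fun _ => a) t := by
    rintro (_ | k) t
    · exact hasDerivAt_const t 1
    · exact (((hasDerivAt_id t).sub_const s).const_mul a).congr_deriv (mul_one a)
  have hA0 : ∀ k, ∀ t ∈ Icc s T, 0 ≤ A k t := by
    rintro (_ | _) t ht
    · exact zero_le_one
    · exact mul_nonneg ha (sub_nonneg.2 ht.1)
  have henergy (t : ℝ) (x : Euc d) :
      energy θ (u t) (a * (t - s)) h x = ∑ k, A k t * g k t x ^ 2 := by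
    simp only [energy, A, g, Fintype.sum_option, Option.elim, one_mul, Finset.mul_sum]
  simp only [henergy] at hfar hbad
  obtain ⟨t, ht, x, hx, hlt, hle⟩ := exists_lt_and_mul_le_of_lt (μ := μ) hg hQ hA hA0 hV hr hμ hμr
    (fun x => by simpa [← henergy, energy] using hinit x) hfar ht₁ hbad
  refine ⟨t, ht, x, hx, (henergy t x).symm ▸ hlt, (henergy t x).symm ▸ hle.trans_eq ?_⟩
  simp only [Fintype.sum_option, A, g, Option.elim, remainder, zero_mul, mul_zero, zero_add,
    add_zero, one_mul, Finset.mul_sum,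
    grad_mul_diffQuot (hu.contDiff t ht) (hθ.differentiable two_ne_zero) hh,
    grad_diffQuot ((hu.contDiff t ht).differentiable two_ne_zero) hh]

theorem exists_le_and_le_of_eventually {X Y : Type*} [TopologicalSpace X] [TopologicalSpace Y]
    [T2Space X] [T2Space Y] {K : Set (Y × X)} (hK : IsCompact K) {f g f' g' : Y × X → ℝ}
    (hf : ContinuousOn f K) (hg : ContinuousOn g K) (hf' : ContinuousOn f' K)
    (hg' : ContinuousOn g' K) {l : Filter Y} [l.NeBot] {y : Y} (hl : l ≤ 𝓝 y)
    (h : ∀ᶠ z in l, ∃ x, (z, x) ∈ K ∧ f (z, x) ≤ g (z, x) ∧ f' (z, x) ≤ g' (z, x)) :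
    ∃ x, (y, x) ∈ K ∧ f (y, x) ≤ g (y, x) ∧ f' (y, x) ≤ g' (y, x) := by
  have hclosed : IsClosed ({p ∈ K | f p ≤ g p} ∩ {p ∈ K | f' p ≤ g' p}) :=
    (hK.isClosed.isClosed_le hf hg).inter (hK.isClosed.isClosed_le hf' hg')
  have hmem : y ∈ Prod.fst '' ({p ∈ K | f p ≤ g p} ∩ {p ∈ K | f' p ≤ g' p}) :=
    ((hK.of_isClosed_subset hclosed fun p hp => hp.1.1).image
      continuous_fst).isClosed.mem_of_tendsto (tendsto_id'.2 hl)
      (h.mono fun z ⟨x, hx, hle, hle'⟩ => ⟨(z, x), ⟨⟨hx, hle⟩, hx, hle'⟩, rfl⟩)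
  obtain ⟨⟨_, x⟩, ⟨⟨hx, hle⟩, -, hle'⟩, rfl⟩ := hmem
  exact ⟨x, hx, hle, hle'⟩

theorem exists_energy_le (hu : IsSpatiallyC1On u (Icc s T)) (hθ : Continuous θ)
    (hsupp : HasCompactSupport θ) {τ : ℝ → ℝ} (hτ : Continuous τ) {B : ℝ}
    (hB : ∀ t ∈ Icc s T, ∀ x, |u t x| ≤ B) :
    ∃ B', ∀ h ∈ Icc (0 : ℝ) 1, ∀ t ∈ Icc s T, ∀ x, energy θ (u t) (τ t) h x ≤ B' := by
  obtain ⟨B₁, hB₁⟩ := (isCompact_Icc.prod (isCompact_Icc.prod hsupp)).exists_bound_of_continuousOn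
    ((continuousOn_energy hu hθ hτ).mono (prod_mono (subset_univ (Icc (0 : ℝ) 1))
      (prod_mono le_rfl (subset_univ _))))
  refine ⟨max B₁ (B ^ 2), fun h hh t ht x => ?_⟩
  by_cases hx : x ∈ tsupport θ
  · exact (le_abs_self _).trans ((hB₁ (h, t, x) ⟨hh, ht, hx⟩).trans (le_max_left _ _))
  · have henergy : energy θ (u t) (τ t) h x = u t x ^ 2 := by
      simp [energy, image_eq_zero_of_notMem_tsupport hx]
    rw [henergy]
    exact (sq_le_sq.2 ((hB t ht x).trans (le_abs_self B))).trans (le_max_right _ _)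

/-- For each small `h ≠ 0` the comparison function is touched by the energy of the difference
quotients; the touching points stay in a compact set, so they survive the limit `h → 0`. -/
theorem exists_le_and_mul_le_remainder_zero_of_lt
    (hu : IsForcedSolution Q b c s T (fun _ _ => 0) u)
    (hcoef : HasSpatiallyC1Coeffs Q b c (Icc s T)) (hspat : IsSpatiallyC1On u (Icc s T))
    (hgrad : ∀ i, IsSpatiallyC1On (fun t x => grad (u t) x i) (Icc s T))
    (hQ : ∀ t ∈ Ioc s T, ∀ x, (Matrix.of (Q t x)).PosSemidef)
    (hV : IsCoerciveSupersolution Q b c s T V) (hθ : ContDiff ℝ 2 θ) (hsupp : HasCompactSupport θ)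
    {B : ℝ} (hB : ∀ t ∈ Icc s T, ∀ x, |u t x| ≤ B) {lam t₀ r μ a : ℝ} (hr : 0 < r) (hμ : μ ≤ 2)
    (hμr : μ ≤ 4 / r - 2) (ha : 0 ≤ a) (hlam : 0 ≤ lam) (ht₀ : t₀ ≤ s)
    (hinit : ∀ x, u s x ^ 2 ≤ Real.exp (lam * (s - t₀)) * V s x ^ r)
    {t₁ : ℝ} (ht₁ : t₁ ∈ Icc s T) {x₁ : Euc d}
    (hbad : Real.exp (lam * (t₁ - t₀)) * V t₁ x₁ ^ r < energy θ (u t₁) (a * (t₁ - s)) 0 x₁) :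
    ∃ t ∈ Icc s T, ∃ x,
      Real.exp (lam * (t - t₀)) * V t x ^ r ≤ energy θ (u t) (a * (t - s)) 0 x ∧
      (lam - (2 - r) * c t x) * energy θ (u t) (a * (t - s)) 0 x
        ≤ remainder (Q t) (b t) (c t) θ (u t) a (a * (t - s)) μ 0 x := by
  obtain ⟨FV, hFV, -⟩ := hV.exists_forcing
  have hτ : Continuous fun t => a * (t - s) := by fun_prop
  obtain ⟨B', hB'⟩ := exists_energy_le hspat hθ.continuous hsupp hτ hB
  obtain ⟨ρ, hρ⟩ := hV.exists_le_exp_mul_rpow hlam ht₀ hr B'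
  have hE := continuousOn_energy hspat hθ.continuous hτ
  have hR := continuousOn_remainder hcoef hspat hgrad hθ a μ hτ
  have hD : ContinuousOn (fun p : ℝ × ℝ × Euc d =>
      Real.exp (lam * (p.2.1 - t₀)) * V p.2.1 p.2.2 ^ r) (univ ×ˢ Icc s T ×ˢ univ) :=
    (hFV.rpow_mul_exp hV.pos lam t₀ r).continuousOn.comp continuousOn_snd fun _ hp => hp.2
  have hC : ContinuousOn (fun p : ℝ × ℝ × Euc d => lam - (2 - r) * c p.2.1 p.2.2)
      (univ ×ˢ Icc s T ×ˢ univ) :=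
    continuousOn_const.sub (hcoef.potential.continuousOn_comp_snd.const_mul _)
  have hKsub : Icc (0 : ℝ) 1 ×ˢ Icc s T ×ˢ Metric.closedBall (0 : Euc d) ρ
      ⊆ univ ×ˢ Icc s T ×ˢ univ := prod_mono (subset_univ _) (prod_mono le_rfl (subset_univ _))
  have hbad' : ∀ᶠ h in 𝓝[>] (0 : ℝ), Real.exp (lam * (t₁ - t₀)) * V t₁ x₁ ^ r
      < energy θ (u t₁) (a * (t₁ - s)) h x₁ := by
    have hcont : Continuous fun h => energy θ (u t₁) (a * (t₁ - s)) h x₁ :=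
      hE.comp_continuous (f := fun h => (h, t₁, x₁)) (by fun_prop)
        fun _ => ⟨mem_univ _, ht₁, mem_univ _⟩
    exact nhdsWithin_le_nhds (hcont.continuousAt.eventually_const_lt hbad)
  obtain ⟨⟨t, x⟩, ⟨-, ht, -⟩, hle⟩ := exists_le_and_le_of_eventually
    (isCompact_Icc.prod (isCompact_Icc.prod (isCompact_closedBall 0 ρ)))
    (hD.mono hKsub) (hE.mono hKsub) ((hC.mul hE).mono hKsub) (hR.mono hKsub) nhdsWithin_le_nhds
    (by
      filter_upwards [hbad', Ioc_mem_nhdsGT one_pos] with h hbad hh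
      obtain ⟨t, ht, x, hx, hlt, hle⟩ := exists_lt_and_mul_le_remainder_of_lt hu hQ hV hθ hr hμ hμr
        ha hh.1.ne' hinit (fun t ht x hx => (hB' h ⟨hh.1.le, hh.2⟩ t ht x).trans (hρ t ht x hx))
        ht₁ hbad
      exact ⟨(t, x), ⟨Ioc_subset_Icc_self hh, Ioc_subset_Icc_self ht,
        mem_closedBall_zero_iff.2 hx⟩, hlt.le, hle⟩)
  exact ⟨t, ht, x, hle⟩

theorem IsForcedSolution.energy_le (hu : IsForcedSolution Q b c s T (fun _ _ => 0) u)
    (hcoef : HasSpatiallyC1Coeffs Q b c (Icc s T)) (hspat : IsSpatiallyC1On u (Icc s T))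
    (hgrad : ∀ i, IsSpatiallyC1On (fun t x => grad (u t) x i) (Icc s T))
    (hQ : ∀ t ∈ Ioc s T, ∀ x, (Matrix.of (Q t x)).PosSemidef)
    (hV : IsCoerciveSupersolution Q b c s T V) (hθ : ContDiff ℝ 2 θ) (hsupp : HasCompactSupport θ)
    {B : ℝ} (hB : ∀ t ∈ Icc s T, ∀ x, |u t x| ≤ B)
    {c₁ : ℝ} (hc : ∀ t ∈ Icc s T, ∀ x, c t x ≤ c₁)
    {lam t₀ r μ a ζ : ℝ} (hr : 0 < r) (hr2 : r ≤ 2) (hμ : μ ≤ 2) (hμr : μ ≤ 4 / r - 2)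
    (ha : 0 ≤ a) (hζ : 0 ≤ ζ)
    (hrem : ∀ t ∈ Icc s T, ∀ x,
      remainder (Q t) (b t) (c t) θ (u t) a (a * (t - s)) μ 0 x ≤ ζ * u t x ^ 2)
    (hlam0 : 0 ≤ lam) (hlam : (2 - r) * c₁ + ζ < lam) (ht₀ : t₀ ≤ s)
    (hinit : ∀ x, u s x ^ 2 ≤ Real.exp (lam * (s - t₀)) * V s x ^ r) :
    ∀ t ∈ Icc s T, ∀ x,
      energy θ (u t) (a * (t - s)) 0 x ≤ Real.exp (lam * (t - t₀)) * V t x ^ r := by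
  intro t₁ ht₁ x₁
  by_contra! hbad
  obtain ⟨t, ht, x, hle, hle'⟩ := exists_le_and_mul_le_remainder_zero_of_lt hu hcoef hspat hgrad hQ
    hV hθ hsupp hB hr hμ hμr ha hlam0 ht₀ hinit ht₁ hbad
  have hpos := mul_pos (Real.exp_pos (lam * (t - t₀))) (Real.rpow_pos_of_pos (hV.pos t ht x) r)
  have hsq : u t x ^ 2 ≤ energy θ (u t) (a * (t - s)) 0 x :=
    le_add_of_nonneg_right (mul_nonneg (mul_nonneg ha (sub_nonneg.2 ht.1))
      (Finset.sum_nonneg fun _ _ => sq_nonneg _))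
  have hgap : 0 < lam - (2 - r) * c t x - ζ := by
    linarith [mul_le_mul_of_nonneg_left (hc t ht x) (sub_nonneg.2 hr2)]
  linarith [mul_pos hgap (hpos.trans_le hle), hrem t ht x, mul_le_mul_of_nonneg_left hsq hζ]

end EnergyBound

section Cutoff

open scoped Topology

variable {d : ℕ}

theorem tsupport_deriv_smoothTransition_subset :
    tsupport (deriv Real.smoothTransition) ⊆ Icc 0 1 := by
  refine closure_minimal (fun σ hσ => ?_) isClosed_Icc
  by_contra hmem
  refine hσ ?_
  rcases not_and_or.1 hmem with h | h
  · have hzero : Real.smoothTransition =ᶠ[𝓝 σ] fun _ => 0 := by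
      filter_upwards [Iio_mem_nhds (not_le.1 h)] with y hy
      exact Real.smoothTransition.zero_of_nonpos (le_of_lt hy)
    rw [hzero.deriv_eq, deriv_const]
  · have hone : Real.smoothTransition =ᶠ[𝓝 σ] fun _ => 1 := by
      filter_upwards [Ioi_mem_nhds (not_le.1 h)] with y hy
      exact Real.smoothTransition.one_of_one_le (le_of_lt hy)
    rw [hone.deriv_eq, deriv_const]

theorem contDiff_deriv_smoothTransition : ContDiff ℝ 1 (deriv Real.smoothTransition) :=
  (contDiff_succ_iff_deriv (n := 1).1 (Real.smoothTransition.contDiff (n := 2))).2.2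

theorem exists_abs_deriv_smoothTransition_le : ∃ K ≥ 0, ∀ σ,
    |deriv Real.smoothTransition σ| ≤ K ∧ |deriv (deriv Real.smoothTransition) σ| ≤ K := by
  have hsupp : HasCompactSupport (deriv Real.smoothTransition) :=
    isCompact_Icc.of_isClosed_subset (isClosed_tsupport _) tsupport_deriv_smoothTransition_subset
  obtain ⟨K₁, hK₁⟩ := contDiff_deriv_smoothTransition.continuous.bounded_above_of_compact_support
    hsupp
  obtain ⟨K₂, hK₂⟩ := (contDiff_deriv_smoothTransition.continuous_deriv
    le_rfl).bounded_above_of_compact_support hsupp.deriv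
  exact ⟨max K₁ K₂, ((norm_nonneg _).trans (hK₁ 0)).trans (le_max_left _ _),
    fun σ => ⟨(hK₁ σ).trans (le_max_left _ _), (hK₂ σ).trans (le_max_right _ _)⟩⟩

/-- A smooth radial cutoff function, equal to `1` for `‖x‖ ≤ R` and to `0` for `‖x‖² ≥ 2R²`. -/
def cutoff (R : ℝ) (x : Euc d) : ℝ :=
  Real.smoothTransition (2 - ‖x‖ ^ 2 / R ^ 2)

theorem contDiff_two_sub_norm_sq_div (R : ℝ) :
    ContDiff ℝ 2 fun x : Euc d => 2 - ‖x‖ ^ 2 / R ^ 2 :=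
  contDiff_const.sub ((contDiff_norm_sq ℝ).div_const _)

theorem contDiff_cutoff (R : ℝ) : ContDiff ℝ 2 (cutoff (d := d) R) :=
  Real.smoothTransition.contDiff.comp (contDiff_two_sub_norm_sq_div R)

theorem hasCompactSupport_cutoff {R : ℝ} (hR : 0 < R) : HasCompactSupport (cutoff (d := d) R) := by
  refine HasCompactSupport.intro (isCompact_closedBall 0 (2 * R)) fun x hx => ?_
  have hfar : 2 * R < ‖x‖ := by simpa using hx
  refine Real.smoothTransition.zero_of_nonpos (sub_nonpos.2 ?_)
  rw [le_div_iff₀ (by positivity)]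
  nlinarith

theorem cutoff_eq_one {R : ℝ} (hR : 0 < R) {x : Euc d} (hx : ‖x‖ ≤ R) : cutoff R x = 1 := by
  refine Real.smoothTransition.one_of_one_le ?_
  have : ‖x‖ ^ 2 / R ^ 2 ≤ 1 := (div_le_one (by positivity)).2 (by gcongr)
  linarith

theorem grad_two_sub_norm_sq_div (R : ℝ) (x : Euc d) :
    grad (fun y => 2 - ‖y‖ ^ 2 / R ^ 2) x = (-2 / R ^ 2) • fun i => x i := by
  ext i
  have h : HasFDerivAt (fun y : Euc d => 2 - (R ^ 2)⁻¹ * ‖y‖ ^ 2)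
      (-((R ^ 2)⁻¹ • (2 • innerSL ℝ x))) x :=
    ((hasStrictFDerivAt_norm_sq x).hasFDerivAt.const_mul _).const_sub 2
  simp only [grad, div_eq_inv_mul _ (R ^ 2), h.fderiv]
  simp [EuclideanSpace.inner_single_right]
  ring

theorem ellipticOp_two_sub_norm_sq_div (q : Fin d → Fin d → ℝ) (β : Fin d → ℝ) (R : ℝ)
    (x : Euc d) : ellipticOp q β (fun y => 2 - ‖y‖ ^ 2 / R ^ 2) x
      = -2 / R ^ 2 * (∑ i, q i i + ∑ i, β i * x i) := by
  have hhess (i j : Fin d) : hess d (fun y => 2 - ‖y‖ ^ 2 / R ^ 2) x i j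
      = if i = j then -2 / R ^ 2 else 0 := by
    have hcoord : HasFDerivAt (fun y : Euc d => -2 / R ^ 2 * y j)
        ((-2 / R ^ 2) • (EuclideanSpace.proj j : Euc d →L[ℝ] ℝ)) x :=
      ((EuclideanSpace.proj j : Euc d →L[ℝ] ℝ).hasFDerivAt).const_mul _
    simp only [hess_eq_grad, grad_two_sub_norm_sq_div, Pi.smul_apply, smul_eq_mul]
    simp [grad, hcoord.fderiv, eq_comm]
  simp only [ellipticOp, hhess, grad_two_sub_norm_sq_div, Pi.smul_apply, smul_eq_mul, mul_ite,
    mul_zero, Finset.sum_ite_eq, Finset.mem_univ, if_true, mul_add, Finset.mul_sum]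
  congr 1 <;> exact Finset.sum_congr rfl fun i _ => by ring

theorem grad_cutoff (R : ℝ) (x : Euc d) : grad (cutoff R) x
    = deriv Real.smoothTransition (2 - ‖x‖ ^ 2 / R ^ 2) • (-2 / R ^ 2) • fun i => x i := by
  rw [← grad_two_sub_norm_sq_div]
  exact grad_comp ((Real.smoothTransition.contDiff (n := 1)).differentiable one_ne_zero
    _).hasDerivAt ((contDiff_two_sub_norm_sq_div R).differentiable two_ne_zero x)

theorem ellipticOp_cutoff (q : Fin d → Fin d → ℝ) (β : Fin d → ℝ) (R : ℝ) (x : Euc d) :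
    ellipticOp q β (cutoff R) x
      = deriv Real.smoothTransition (2 - ‖x‖ ^ 2 / R ^ 2)
          * (-2 / R ^ 2 * (∑ i, q i i + ∑ i, β i * x i))
        + deriv (deriv Real.smoothTransition) (2 - ‖x‖ ^ 2 / R ^ 2)
          * ((-2 / R ^ 2) * ((-2 / R ^ 2) * bilin q (fun i => x i) fun i => x i)) := by
  have h := ellipticOp_comp q β (x := x) (contDiff_two_sub_norm_sq_div R)
    (fun y => ((Real.smoothTransition.contDiff (n := 1)).differentiable one_ne_zero
      (2 - ‖y‖ ^ 2 / R ^ 2)).hasDerivAt)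
    (contDiff_deriv_smoothTransition.differentiable one_ne_zero _).hasDerivAt
  rwa [ellipticOp_two_sub_norm_sq_div, grad_two_sub_norm_sq_div, map_smul, map_smul,
    LinearMap.smul_apply, smul_eq_mul, smul_eq_mul] at h

end Cutoff

section CutoffBounds

variable {d : ℕ}

theorem two_div_sq_mul_growth_le {R : ℝ} (hR : 1 ≤ R) {y : ℝ} (hy0 : 0 ≤ y) (hy : y ≤ 2 * R ^ 2)
    {ν : ℝ} (hν : 0 ≤ ν) (C : ℝ) : 2 / R ^ 2 * (C * (1 + y) * ν) ≤ 6 * |C| * ν := by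
  have hR2 : 1 ≤ R ^ 2 := one_le_pow₀ hR
  have hsix : 2 / R ^ 2 * (1 + y) ≤ 6 := by
    rw [div_mul_eq_mul_div, div_le_iff₀ (by positivity)]
    linarith
  calc 2 / R ^ 2 * (C * (1 + y) * ν) ≤ 2 / R ^ 2 * (|C| * (1 + y) * ν) := by
        gcongr; exact le_abs_self C
    _ = 2 / R ^ 2 * (1 + y) * (|C| * ν) := by ring
    _ ≤ 6 * (|C| * ν) := by gcongr
    _ = 6 * |C| * ν := by ring

theorem two_div_sq_mul_abs_apply_le {R : ℝ} (hR : 1 ≤ R) {x : Euc d} (hx : ‖x‖ ^ 2 ≤ 2 * R ^ 2)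
    (i : Fin d) : 2 / R ^ 2 * |x i| ≤ 4 := by
  have hxR : |x i| ≤ 2 * R := (PiLp.norm_apply_le x i).trans (by nlinarith [norm_nonneg x])
  rw [div_mul_eq_mul_div, div_le_iff₀ (by positivity)]
  nlinarith

theorem abs_mul_neg_two_div_le {φ' K R y B : ℝ} (hφ' : |φ'| ≤ K) (hy : 2 / R ^ 2 * |y| ≤ B) :
    |φ' * (-2 / R ^ 2 * y)| ≤ K * B := by
  have habs : |-2 / R ^ 2 * y| = 2 / R ^ 2 * |y| := by
    rw [abs_mul, neg_div, abs_neg, abs_of_nonneg (by positivity)]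
  rw [abs_mul, habs]
  exact mul_le_mul hφ' hy (by positivity) ((abs_nonneg _).trans hφ')

section Annulus

variable {R : ℝ} {x : Euc d} {q : Fin d → Fin d → ℝ} {β : Fin d → ℝ} {ν C₁ C₂ K : ℝ}

theorem abs_grad_cutoff_le (hR : 1 ≤ R) (hx : ‖x‖ ^ 2 ≤ 2 * R ^ 2)
    (hφ' : |deriv Real.smoothTransition (2 - ‖x‖ ^ 2 / R ^ 2)| ≤ K) (i : Fin d) :
    |grad (cutoff R) x i| ≤ K * 4 := by
  rw [grad_cutoff]
  exact abs_mul_neg_two_div_le hφ' (two_div_sq_mul_abs_apply_le hR hx i)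

theorem two_div_sq_mul_abs_mulVec_le (hR : 1 ≤ R) (hx : ‖x‖ ^ 2 ≤ 2 * R ^ 2) (hν : 0 ≤ ν)
    (hq : (Matrix.of q).PosSemidef)
    (hgrowthQ : √(∑ i, (∑ j, q i j * x j) ^ 2) + ∑ i, q i i ≤ C₁ * (1 + ‖x‖ ^ 2) * ν)
    (i : Fin d) : 2 / R ^ 2 * |∑ j, q i j * x j| ≤ 6 * |C₁| * ν := by
  have htrace : 0 ≤ ∑ i, q i i := Finset.sum_nonneg fun i _ => hq.diag_nonneg
  refine le_trans ?_ (two_div_sq_mul_growth_le hR (sq_nonneg ‖x‖) hx hν C₁)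
  gcongr
  linarith [abs_le_sqrt_sum_sq (fun i => ∑ j, q i j * x j) i]

theorem two_div_sq_mul_trace_add_drift_le (hR : 1 ≤ R) (hx : ‖x‖ ^ 2 ≤ 2 * R ^ 2) (hν : 0 ≤ ν)
    (hgrowthQ : √(∑ i, (∑ j, q i j * x j) ^ 2) + ∑ i, q i i ≤ C₁ * (1 + ‖x‖ ^ 2) * ν)
    (hgrowthb : ∑ i, β i * x i ≤ C₂ * (1 + ‖x‖ ^ 2) * ν) :
    2 / R ^ 2 * (∑ i, q i i + ∑ i, β i * x i) ≤ 6 * (|C₁| + |C₂|) * ν := by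
  have htrace := (le_add_of_nonneg_left (Real.sqrt_nonneg _)).trans hgrowthQ
  have hsum := mul_le_mul_of_nonneg_left (add_le_add htrace hgrowthb)
    (by positivity : 0 ≤ 2 / R ^ 2)
  linarith [two_div_sq_mul_growth_le hR (sq_nonneg ‖x‖) hx hν C₁,
    two_div_sq_mul_growth_le hR (sq_nonneg ‖x‖) hx hν C₂]

theorem abs_flux_cutoff_le (hq : (Matrix.of q).PosSemidef)
    (hφ' : |deriv Real.smoothTransition (2 - ‖x‖ ^ 2 / R ^ 2)| ≤ K) {B : ℝ} {j : Fin d}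
    (hB : 2 / R ^ 2 * |∑ i, q j i * x i| ≤ B) :
    |∑ i, q i j * grad (cutoff R) x i| ≤ K * B := by
  have hsymm (i : Fin d) : q i j = q j i := by simpa using (hq.isHermitian.apply i j).symm
  convert abs_mul_neg_two_div_le hφ' hB using 2
  simp only [grad_cutoff, Pi.smul_apply, smul_eq_mul, hsymm, Finset.mul_sum]
  exact Finset.sum_congr rfl fun i _ => by ring

theorem neg_le_ellipticOp_cutoff (hR : 1 ≤ R) (hx : ‖x‖ ^ 2 ≤ 2 * R ^ 2)
    (hφ' : |deriv Real.smoothTransition (2 - ‖x‖ ^ 2 / R ^ 2)| ≤ K)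
    (hφ'' : |deriv (deriv Real.smoothTransition) (2 - ‖x‖ ^ 2 / R ^ 2)| ≤ K) {A B : ℝ}
    (hA0 : 0 ≤ A) (hA : 2 / R ^ 2 * (∑ i, q i i + ∑ i, β i * x i) ≤ A)
    (hB : ∀ i, 2 / R ^ 2 * |∑ j, q i j * x j| ≤ B) :
    -(K * (A + d * (4 * B))) ≤ ellipticOp q β (cutoff R) x := by
  have hK : 0 ≤ K := (abs_nonneg _).trans hφ'
  have hfirst : deriv Real.smoothTransition (2 - ‖x‖ ^ 2 / R ^ 2)
      * (2 / R ^ 2 * (∑ i, q i i + ∑ i, β i * x i)) ≤ K * A :=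
    (mul_le_mul_of_nonneg_left hA Real.smoothTransition.monotone.deriv_nonneg).trans
      (mul_le_mul_of_nonneg_right ((le_abs_self _).trans hφ') hA0)
  have hbilin : 2 / R ^ 2 * (2 / R ^ 2 * bilin q (fun i => x i) fun i => x i)
      = ∑ i, 2 / R ^ 2 * x i * (2 / R ^ 2 * ∑ j, q i j * x j) := by
    simp only [bilin_apply, Finset.mul_sum]
    exact Finset.sum_congr rfl fun i _ => Finset.sum_congr rfl fun j _ => by ring
  have hsecond : |2 / R ^ 2 * (2 / R ^ 2 * bilin q (fun i => x i) fun i => x i)| ≤ d * (4 * B) := by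
    rw [hbilin]
    refine (abs_sum_le_card_mul (B := 4 * B) fun i => ?_).trans_eq (by rw [Fintype.card_fin])
    rw [abs_mul, abs_mul, abs_mul, abs_of_nonneg (by positivity : 0 ≤ 2 / R ^ 2)]
    exact mul_le_mul (two_div_sq_mul_abs_apply_le hR hx i) (hB i) (by positivity) zero_le_four
  have hproduct := neg_le_of_abs_le ((abs_mul _ _).trans_le
    (mul_le_mul hφ'' hsecond (abs_nonneg _) hK))
  rw [ellipticOp_cutoff]
  linear_combination hfirst + hproduct

end Annulus

/-- The first derivatives of the cutoff function only enter through upper bounds on `Tr q` and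
`⟨β, x⟩`, because the profile is monotone. -/
theorem isCutoffAt_cutoff {R : ℝ} (hR : 1 ≤ R) {x : Euc d} {q : Fin d → Fin d → ℝ}
    {β : Fin d → ℝ} {ν C₁ C₂ K : ℝ} (hν : 0 ≤ ν) (hq : (Matrix.of q).PosSemidef)
    (hK : ∀ σ, |deriv Real.smoothTransition σ| ≤ K ∧ |deriv (deriv Real.smoothTransition) σ| ≤ K)
    (hgrowthQ : √(∑ i, (∑ j, q i j * x j) ^ 2) + ∑ i, q i i ≤ C₁ * (1 + ‖x‖ ^ 2) * ν)
    (hgrowthb : ∑ i, β i * x i ≤ C₂ * (1 + ‖x‖ ^ 2) * ν) :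
    IsCutoffAt q β ν (K * (4 + 6 * (|C₁| + |C₂|) + 24 * d * |C₁|)) (cutoff R) x := by
  have hmem : cutoff R x ∈ Icc (0 : ℝ) 1 :=
    ⟨Real.smoothTransition.nonneg _, Real.smoothTransition.le_one _⟩
  have hK0 : 0 ≤ K := (abs_nonneg _).trans (hK 0).1
  by_cases hσ : 2 - ‖x‖ ^ 2 / R ^ 2 ∈ tsupport (deriv Real.smoothTransition)
  · have hx : ‖x‖ ^ 2 ≤ 2 * R ^ 2 := by
      rw [← div_le_iff₀ (by positivity)]
      linarith [(tsupport_deriv_smoothTransition_subset hσ).1]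
    have hQx := two_div_sq_mul_abs_mulVec_le hR hx hν hq hgrowthQ
    have hsum := two_div_sq_mul_trace_add_drift_le hR hx hν hgrowthQ hgrowthb
    refine ⟨hmem, fun i => ?_, fun j => ?_, ?_⟩
    · refine (abs_grad_cutoff_le hR hx (hK _).1 i).trans (mul_le_mul_of_nonneg_left ?_ hK0)
      linarith [show 0 ≤ 6 * (|C₁| + |C₂|) + 24 * d * |C₁| by positivity]
    · refine (abs_flux_cutoff_le hq (hK _).1 (hQx j)).trans ?_
      rw [mul_assoc K]
      gcongr
      linarith [show 0 ≤ 4 + 6 * |C₂| + 24 * d * |C₁| by positivity]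
    · refine le_trans (neg_le_neg ?_)
        (neg_le_ellipticOp_cutoff hR hx (hK _).1 (hK _).2 (by positivity) hsum hQx)
      rw [mul_assoc K]
      refine mul_le_mul_of_nonneg_left ?_ hK0
      linear_combination 4 * hν
  · have hφ' : deriv Real.smoothTransition (2 - ‖x‖ ^ 2 / R ^ 2) = 0 :=
      image_eq_zero_of_notMem_tsupport hσ
    have hφ'' : deriv (deriv Real.smoothTransition) (2 - ‖x‖ ^ 2 / R ^ 2) = 0 :=
      Function.notMem_support.1 fun h => hσ (support_deriv_subset h)
    refine ⟨hmem, fun i => ?_, fun j => ?_, ?_⟩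
    · simp only [grad_cutoff, hφ', zero_smul, Pi.zero_apply, abs_zero]
      positivity
    · simp only [grad_cutoff, hφ', zero_smul, Pi.zero_apply, mul_zero, Finset.sum_const_zero,
        abs_zero]
      positivity
    · rw [ellipticOp_cutoff, hφ', hφ'', zero_mul, zero_mul, add_zero, neg_nonpos]
      positivity

end CutoffBounds

section Hypotheses

variable {d : ℕ}

theorem LocHolderParab.continuousOn {α : ℝ} (hα : 0 < α) {I : Set ℝ} {g : ℝ → Euc d → ℝ}
    (hg : LocHolderParab d α I g) :
    ContinuousOn (fun p : ℝ × Euc d => g p.1 p.2) (I ×ˢ univ) := by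
  rw [continuousOn_iff_continuous_domRestrict, continuous_iff_seqContinuous]
  intro z p hz
  have hz' := (continuous_subtype_val.tendsto p).comp hz
  obtain ⟨C, -, hC⟩ := hg _ hz'.isCompact_insert_range
    (insert_subset p.2 (range_subset_iff.2 fun n => (z n).2))
  have hdist : Continuous fun q : ℝ × Euc d => pdist d q p := by
    unfold pdist; fun_prop
  have hlim : Tendsto (fun n => C * pdist d (z n) p ^ α) atTop (nhds 0) := by
    have h := (((hdist.rpow_const fun _ => Or.inr hα.le).const_mul C).tendsto p.1).comp hz'
    simpa [Function.comp_def, pdist, Real.zero_rpow hα.ne'] using h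
  refine tendsto_iff_dist_tendsto_zero.2 (squeeze_zero (fun _ => dist_nonneg) (fun n => ?_) hlim)
  exact hC _ (mem_insert_of_mem _ (mem_range_self n)) _ (mem_insert _ _)

theorem norm_sq_eq_sum_apply_single (l : Euc d →L[ℝ] ℝ) :
    ‖l‖ ^ 2 = ∑ k, l (EuclideanSpace.single k 1) ^ 2 := by
  obtain ⟨y, rfl⟩ := (InnerProductSpace.toDual ℝ (Euc d)).surjective l
  simp [EuclideanSpace.norm_sq_eq, EuclideanSpace.inner_single_right]

theorem abs_grad_le_norm_fderiv (g : Euc d → ℝ) (x : Euc d) (i : Fin d) :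
    |grad g x i| ≤ ‖fderiv ℝ g x‖ := by
  simpa [grad] using (fderiv ℝ g x).le_opNorm (EuclideanSpace.single i 1)

theorem minEig_mul_sum_sq_le_bilin (q : Fin d → Fin d → ℝ) (ξ : Fin d → ℝ) :
    minEig d q * ∑ i, ξ i ^ 2 ≤ bilin q ξ ξ := by
  set y : Euc d := WithLp.toLp 2 ξ
  have hnorm : ‖y‖ ^ 2 = ∑ i, ξ i ^ 2 := by simp [y, EuclideanSpace.norm_sq_eq]
  rcases eq_or_ne y 0 with hy | hy
  · have hξ : ξ = 0 := by simpa [y] using hy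
    simp [hξ]
  have hbdd : BddBelow ((fun η : Euc d => ∑ i, ∑ j, q i j * η i * η j) '' Metric.sphere 0 1) :=
    (isCompact_sphere 0 1).bddBelow_image (by fun_prop)
  have hle : minEig d q ≤ _ := csInf_le (by simpa [image] using hbdd)
    ⟨‖y‖⁻¹ • y, norm_smul_inv_norm hy, rfl⟩
  have hscale : ∑ i, ∑ j, q i j * (‖y‖⁻¹ • y) i * (‖y‖⁻¹ • y) j = (‖y‖ ^ 2)⁻¹ * bilin q ξ ξ := by
    simp only [bilin_apply, Finset.mul_sum]
    exact Finset.sum_congr rfl fun i _ => Finset.sum_congr rfl fun j _ => by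
      simp [y]; ring
  rw [hscale, inv_mul_eq_div, le_div_iff₀ (by positivity)] at hle
  rwa [← hnorm]

theorem rpow_le_rpow_sub_one_mul {ν₀ ν γ : ℝ} (hν₀ : 0 < ν₀) (hν : ν₀ ≤ ν) (hγ : γ ≤ 1) :
    ν ^ γ ≤ ν₀ ^ (γ - 1) * ν := by
  have hν0 := hν₀.trans_le hν
  calc ν ^ γ = ν ^ (γ - 1) * ν := by rw [Real.rpow_sub_one hν0.ne', div_mul_cancel₀ _ hν0.ne']
    _ ≤ ν₀ ^ (γ - 1) * ν := by
      gcongr ?_ * ν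
      exact Real.rpow_le_rpow_of_nonpos hν₀ hν (by linarith)

variable {q : Euc d → Fin d → Fin d → ℝ} {β : Euc d → Fin d → ℝ} {γ : Euc d → ℝ} {x : Euc d}
  {ν₀ σ C L M r ϱ : ℝ}

theorem isBernsteinAt_minEig (hν₀ : 0 < ν₀) (hν : ν₀ ≤ minEig d (q x)) (hσ : σ ≤ 1)
    (hq : ∀ i j, ‖fderiv ℝ (fun y => q y i j) x‖ ≤ C * minEig d (q x) ^ σ)
    (hβ : ∀ ξ : Euc d, ∑ i, ∑ j, grad (fun y => β y i) x j * ξ i * ξ j ≤ r * ‖ξ‖ ^ 2)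
    (hγ : ‖fderiv ℝ γ x‖ ≤ ϱ) (hL : 0 ≤ L) (hdiss : r + L * ϱ ^ 2 ≤ M * minEig d (q x) ^ σ) :
    IsBernsteinAt q β γ (minEig d (q x)) (|C| * ν₀ ^ (σ - 1)) L (|M| * ν₀ ^ (σ - 1)) x := by
  have hrpow (A : ℝ) : A * minEig d (q x) ^ σ ≤ |A| * ν₀ ^ (σ - 1) * minEig d (q x) := by
    rw [mul_assoc]
    exact mul_le_mul (le_abs_self A) (rpow_le_rpow_sub_one_mul hν₀ hν hσ)
      (Real.rpow_nonneg (hν₀.le.trans hν) σ) (abs_nonneg A)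
  refine ⟨minEig_mul_sum_sq_le_bilin (q x),
    fun i j k => (abs_grad_le_norm_fderiv _ x k).trans ((hq i j).trans (hrpow C)), fun ξ => ?_⟩
  set y : Euc d := WithLp.toLp 2 ξ
  have hnorm : ‖y‖ ^ 2 = ∑ k, ξ k ^ 2 := by simp [y, EuclideanSpace.norm_sq_eq]
  have hdrift : ∑ k, ξ k * ∑ i, grad (fun z => β z i) x k * ξ i ≤ r * ‖y‖ ^ 2 := by
    refine (hβ y).trans_eq' ?_
    simp only [Finset.mul_sum, y]
    rw [Finset.sum_comm]
    exact Finset.sum_congr rfl fun i _ => Finset.sum_congr rfl fun j _ => by ring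
  have hpotential : (∑ k, grad γ x k * ξ k) ^ 2 ≤ ϱ ^ 2 * ‖y‖ ^ 2 := by
    have happly : fderiv ℝ γ x y = ∑ k, grad γ x k * ξ k := by
      rw [clm_apply_eq_sum]
      exact Finset.sum_congr rfl fun k _ => mul_comm _ _
    rw [← happly, ← mul_pow, ← sq_abs]
    exact pow_le_pow_left₀ (abs_nonneg _) (((fderiv ℝ γ x).le_opNorm y).trans
      (mul_le_mul_of_nonneg_right hγ (norm_nonneg y))) 2
  calc _ ≤ r * ‖y‖ ^ 2 + L * (ϱ ^ 2 * ‖y‖ ^ 2) := by gcongr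
    _ = (r + L * ϱ ^ 2) * ‖y‖ ^ 2 := by ring
    _ ≤ |M| * ν₀ ^ (σ - 1) * minEig d (q x) * ∑ k, ξ k ^ 2 := by
      rw [← hnorm]
      exact mul_le_mul_of_nonneg_right (hdiss.trans (hrpow M)) (sq_nonneg _)

theorem LocHolderParab.isSpatiallyC1On {α α' : ℝ} {I : Set ℝ} {g : ℝ → Euc d → ℝ}
    (hα : 0 < α) (hα' : 0 < α') (hg : LocHolderParab d α I g)
    (hdiff : ∀ t ∈ I, ∀ x, DifferentiableAt ℝ (g t) x)
    (hgrad : ∀ k, LocHolderParab d α' I fun t x => grad (g t) x k) : IsSpatiallyC1On g I :=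
  ⟨hdiff, hg.continuousOn hα, fun k => (hgrad k).continuousOn hα'⟩

end Hypotheses

section GradientBound

variable {d : ℕ} {Q : ℝ → Euc d → Fin d → Fin d → ℝ} {b : ℝ → Euc d → Fin d → ℝ}
  {c : ℝ → Euc d → ℝ} {s T c₁ B lam r : ℝ}

theorem IsForcedSolution.sq_le_exp_mul_rpow {u V : ℝ → Euc d → ℝ}
    (hu : IsForcedSolution Q b c s T (fun _ _ => 0) u)
    (hQ : ∀ t ∈ Ioc s T, ∀ x, (Matrix.of (Q t x)).PosSemidef)
    (hV : IsCoerciveSupersolution Q b c s T V) (hc : ∀ t ∈ Icc s T, ∀ x, c t x ≤ c₁)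
    (hB : ∀ t ∈ Icc s T, ∀ x, |u t x| ≤ B) (hr : 0 < r) (hr2 : r ≤ 2) (hlam0 : 0 ≤ lam)
    (hlam : (2 - r) * c₁ < lam) (hinit : ∀ x, u s x ^ 2 ≤ V s x ^ r) :
    ∀ t ∈ Icc s T, ∀ x, u t x ^ 2 ≤ Real.exp (lam * (t - s)) * V t x ^ r := by
  intro t₁ ht₁ x₁
  by_contra! hbad
  obtain ⟨ρ, hρ⟩ := hV.exists_le_exp_mul_rpow hlam0 le_rfl hr (B ^ 2)
  have hμr : 0 ≤ 4 / r - 2 := by rw [sub_nonneg, le_div_iff₀ hr]; linarith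
  have hfar : ∀ t ∈ Icc s T, ∀ x, ρ ≤ ‖x‖ → u t x ^ 2 ≤ Real.exp (lam * (t - s)) * V t x ^ r :=
    fun t ht x hx => (sq_le_sq.2 ((hB t ht x).trans (le_abs_self B))).trans (hρ t ht x hx)
  obtain ⟨t, ht, x, -, hlt, hle⟩ := exists_lt_and_mul_le_of_lt (ι := Unit) (t₀ := s)
    (fun _ => hu) hQ (fun _ t => hasDerivAt_const t 1) (fun _ _ _ => zero_le_one) hV hr
    zero_le_two hμr (by simpa using hinit) (by simpa using hfar) ht₁ (by simpa using hbad)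
  have hpos := mul_pos (Real.exp_pos (lam * (t - s)))
    (Real.rpow_pos_of_pos (hV.pos t (Ioc_subset_Icc_self ht) x) r)
  have hgap : 0 < lam - (2 - r) * c t x := by
    linarith [mul_le_mul_of_nonneg_left (hc t (Ioc_subset_Icc_self ht) x) (sub_nonneg.2 hr2)]
  simp only [Finset.univ_unique, Finset.sum_singleton, one_mul, zero_mul, mul_zero, add_zero,
    sub_zero] at hlt hle
  exact hle.not_gt (mul_pos hgap (hpos.trans hlt))

/-- The bound `remainder ≤ ζ w²` for all cutoff functions of radius at least `1`, all weights
`τ ≤ a` and all functions `w`: the only information on the coefficients that the estimate of the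
gradient of a solution needs. -/
def HasRemainderBound (Q : ℝ → Euc d → Fin d → Fin d → ℝ) (b : ℝ → Euc d → Fin d → ℝ)
    (c : ℝ → Euc d → ℝ) (a μ ζ : ℝ) (J : Set ℝ) : Prop :=
  ∀ t ∈ J, ∀ x, ∀ R ≥ 1, ∀ w, ContDiff ℝ 2 w → ∀ τ ∈ Icc 0 a,
    remainder (Q t) (b t) (c t) (cutoff R) w a τ μ 0 x ≤ ζ * w x ^ 2

theorem mul_norm_fderiv_sq_le_energy {R : ℝ} (hR : 0 < R) {w : Euc d → ℝ} {x : Euc d}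
    (hw : DifferentiableAt ℝ w x) (hx : ‖x‖ ≤ R) (τ : ℝ) :
    τ * ‖fderiv ℝ w x‖ ^ 2 ≤ energy (cutoff R) w τ 0 x := by
  simp only [energy, cutoff_eq_one hR hx, one_mul, diffQuot_zero hw, norm_sq_eq_sum_apply_single,
    grad]
  exact le_add_of_nonneg_left (sq_nonneg _)

variable {f : Euc d → ℝ} {u : ℝ → Euc d → ℝ} {μ a ζ : ℝ}

/-- Up to time `T - δ` the solution itself is estimated; from there on, the weight of the gradient
grows from `0` to `aδ`. -/
theorem IsClassicalSolution.mul_norm_fderiv_sq_le_of_supersolution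
    (hu : IsClassicalSolution d Q b c s f u) (hcoef : HasSpatiallyC1Coeffs Q b c (Icc s T))
    (hQ : ∀ t ∈ Icc s T, ∀ x, (Matrix.of (Q t x)).PosSemidef)
    (hc : ∀ t ∈ Icc s T, ∀ x, c t x ≤ c₁) (hB : ∀ t ∈ Icc s T, ∀ x, |u t x| ≤ B)
    (hr : 0 < r) (hr2 : r ≤ 2) (hμ : μ ≤ 2) (hμr : μ ≤ 4 / r - 2) (ha : 0 ≤ a) (hζ : 0 ≤ ζ)
    (hrem : HasRemainderBound Q b c a μ ζ (Icc s T)) (hlam0 : 0 ≤ lam)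
    (hlam : (2 - r) * c₁ + ζ < lam) {δ : ℝ} (hδ : δ ∈ Icc 0 1) (hδT : δ < T - s)
    {V : ℝ → Euc d → ℝ} (hV : IsCoerciveSupersolution Q b c s T V)
    (hinit : ∀ x, f x ^ 2 ≤ V s x ^ r) (x : Euc d) :
    a * δ * ‖fderiv ℝ (u T) x‖ ^ 2 ≤ Real.exp (lam * (T - s)) * V T x ^ r := by
  set s₁ := T - δ
  have hs₁ : s < s₁ := lt_sub_comm.1 hδT
  have hs₁T : s₁ ≤ T := sub_le_self T hδ.1
  have hsub : Icc s₁ T ⊆ Icc s T := Icc_subset_Icc_left hs₁.le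
  have hpositive : Icc s₁ T ⊆ Ioi s := fun t ht => hs₁.trans_le ht.1
  have hsup := (hu.isForcedSolution le_rfl).sq_le_exp_mul_rpow
    (fun t ht => hQ t (Ioc_subset_Icc_self ht)) hV hc hB hr hr2 hlam0 (by linarith)
    fun x => (congrArg (· ^ 2) (hu.init x)).trans_le (hinit x)
  have hR : 1 ≤ max 1 ‖x‖ := le_max_left _ _
  have henergy := (hu.isForcedSolution hs₁.le).energy_le (hcoef.mono hsub)
    (hu.isSpatiallyC1On.mono hpositive) (fun i => (hu.isSpatiallyC1On_grad i).mono hpositive)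
    (fun t ht => hQ t (hsub (Ioc_subset_Icc_self ht))) (hV.mono hs₁.le)
    (contDiff_cutoff (max 1 ‖x‖)) (hasCompactSupport_cutoff (by linarith))
    (fun t ht => hB t (hsub ht)) (fun t ht => hc t (hsub ht)) hr hr2 hμ hμr ha hζ
    (fun t ht y => hrem t (hsub ht) y _ hR _ (hu.xdiff t (hpositive ht))
      _ ⟨mul_nonneg ha (sub_nonneg.2 ht.1), mul_le_of_le_one_right ha (by linarith [ht.2, hδ.2])⟩)
    hlam0 hlam hs₁.le (hsup s₁ ⟨hs₁.le, hs₁T⟩) T ⟨hs₁T, le_rfl⟩ x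
  rw [sub_sub_cancel] at henergy
  exact (mul_norm_fderiv_sq_le_energy (by linarith) ((hu.xdiff T (hs₁.trans_le hs₁T)).differentiable
    two_ne_zero x) (le_max_right _ _) _).trans henergy

theorem le_mul_rpow_of_forall_pos {X E v w r : ℝ} (hr : 0 ≤ r)
    (h : ∀ η > 0, X ≤ E * (v + η * w) ^ r) : X ≤ E * v ^ r := by
  have hcont : Continuous fun η : ℝ => E * (v + η * w) ^ r :=
    continuous_const.mul ((by fun_prop : Continuous fun η : ℝ => v + η * w).rpow_const
      fun _ => Or.inr hr)
  have hlim := (hcont.tendsto 0).mono_left (nhdsWithin_le_nhds (s := Ioi 0))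
  rw [zero_mul, add_zero] at hlim
  exact ge_of_tendsto hlim (eventually_mem_nhdsWithin.mono h)

theorem IsClassicalSolution.mul_norm_fderiv_sq_le
    (hu : IsClassicalSolution d Q b c s f u) (hcoef : HasSpatiallyC1Coeffs Q b c (Icc s T))
    (hQ : ∀ t ∈ Icc s T, ∀ x, (Matrix.of (Q t x)).PosSemidef)
    (hc : ∀ t ∈ Icc s T, ∀ x, c t x ≤ c₁) (hB : ∀ t ∈ Icc s T, ∀ x, |u t x| ≤ B)
    (hr : 0 < r) (hr2 : r ≤ 2) (hμ : μ ≤ 2) (hμr : μ ≤ 4 / r - 2) (ha : 0 ≤ a) (hζ : 0 ≤ ζ)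
    (hrem : HasRemainderBound Q b c a μ ζ (Icc s T)) (hlam0 : 0 ≤ lam)
    (hlam : (2 - r) * c₁ + ζ < lam) {δ : ℝ} (hδ : δ ∈ Icc 0 1) (hδT : δ < T - s)
    {W : ℝ → Euc d → ℝ} (hW : IsCoerciveSupersolution Q b c s T W)
    {g : Euc d → ℝ} (hg : ∀ x, 0 ≤ g x) (hfg : ∀ x, f x ^ 2 ≤ g x ^ r) {v : ℝ → Euc d → ℝ}
    (hv : IsClassicalSolution d Q b c s g v) {B' : ℝ} (hB' : ∀ t ∈ Icc s T, ∀ x, |v t x| ≤ B')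
    (x : Euc d) :
    0 ≤ v T x ∧ a * δ * ‖fderiv ℝ (u T) x‖ ^ 2 ≤ Real.exp (lam * (T - s)) * v T x ^ r := by
  have hsT : s < T := by linarith [hδ.1]
  have hv0 := (hv.isForcedSolution le_rfl).nonneg hW (fun t ht => hQ t (Ioc_subset_Icc_self ht))
    (fun x => by rw [hv.init]; exact hg x) fun t ht x => neg_le_of_abs_le (hB' t ht x)
  refine ⟨hv0 T (right_mem_Icc.2 hsT.le) x, le_mul_rpow_of_forall_pos (w := W T x) hr.le
    fun η hη => ?_⟩
  refine hu.mul_norm_fderiv_sq_le_of_supersolution hcoef hQ hc hB hr hr2 hμ hμr ha hζ hrem hlam0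
    hlam hδ hδT (hW.add_const_mul (hv.isForcedSolution le_rfl) hv0 hη) (fun y => ?_) x
  rw [hv.init]
  exact (hfg y).trans (Real.rpow_le_rpow (hg y) (le_add_of_nonneg_right
    (mul_pos hη (hW.pos s (left_mem_Icc.2 hsT.le) y)).le) hr.le)

end GradientBound

section GradientEstimate

theorem rpow_le_of_mul_sq_le {p a κ δ N v : ℝ} (hp : 0 < p) (ha : 0 < a) (hδ : 0 < δ) (hN : 0 ≤ N)
    (hv : 0 ≤ v)
    (h : a * (min 1 δ / 2) * N ^ 2 ≤ Real.exp (2 / p * κ * δ) * v ^ (2 / p)) :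
    N ^ p ≤ (2 / a) ^ (p / 2) * max 1 (δ ^ (-(p / 2))) * Real.exp (κ * δ) * v := by
  have hp2 : 0 ≤ p / 2 := by positivity
  have hinv : (min 1 δ)⁻¹ ^ (p / 2) ≤ max 1 (δ ^ (-(p / 2))) := by
    rcases le_total 1 δ with h1 | h1
    · simp [min_eq_left h1]
    · rw [min_eq_right h1, Real.inv_rpow hδ.le, ← Real.rpow_neg hδ.le]
      exact le_max_right _ _
  have hsq : N ^ 2 ≤ 2 / a * (min 1 δ)⁻¹ * (Real.exp (2 / p * κ * δ) * v ^ (2 / p)) := by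
    refine (mul_le_mul_of_nonneg_left h (show 0 ≤ 2 / a * (min 1 δ)⁻¹ by positivity)).trans_eq' ?_
    field_simp
  calc N ^ p = (N ^ 2) ^ (p / 2) := by
        rw [← Real.rpow_natCast_mul hN]; congr 1; push_cast; ring
    _ ≤ (2 / a * (min 1 δ)⁻¹ * (Real.exp (2 / p * κ * δ) * v ^ (2 / p))) ^ (p / 2) :=
      Real.rpow_le_rpow (sq_nonneg N) hsq hp2
    _ = (2 / a) ^ (p / 2) * (min 1 δ)⁻¹ ^ (p / 2) * Real.exp (κ * δ) * v := by
      rw [Real.mul_rpow (by positivity) (by positivity),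
        Real.mul_rpow (by positivity) (by positivity), Real.mul_rpow (by positivity)
        (by positivity), ← Real.exp_mul, ← Real.rpow_mul hv,
        show 2 / p * (p / 2) = 1 by field_simp, Real.rpow_one,
        show 2 / p * κ * δ * (p / 2) = κ * δ by field_simp, ← mul_assoc]
    _ ≤ _ := by gcongr

variable {d : ℕ} {I : Set ℝ} {Q : ℝ → Euc d → Fin d → Fin d → ℝ} {b : ℝ → Euc d → Fin d → ℝ}
  {c : ℝ → Euc d → ℝ} {ν : ℝ → Euc d → ℝ} {ν₀ Λ L M C₁ C₂ : ℝ}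

theorem IsBernsteinAt.posSemidef {q : Euc d → Fin d → Fin d → ℝ} {β : Euc d → Fin d → ℝ}
    {γ : Euc d → ℝ} {ν : ℝ} {x : Euc d} (h : IsBernsteinAt q β γ ν Λ L M x) (hν : 0 ≤ ν)
    (hsymm : ∀ i j, q x i j = q x j i) : (Matrix.of (q x)).PosSemidef := by
  refine .of_dotProduct_mulVec_nonneg (Matrix.IsHermitian.ext fun i j => by simp [hsymm i j])
    fun ξ => ?_
  have h := (mul_nonneg hν (Finset.sum_nonneg fun i _ => sq_nonneg (ξ i))).trans (h.elliptic ξ)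
  simpa [bilin, Matrix.toBilin'_apply'] using h

theorem exists_hasRemainderBound (hcoef : HasSpatiallyC1Coeffs Q b c I)
    (hsymm : ∀ t ∈ I, ∀ x i j, Q t x i j = Q t x j i) (hν₀ : 0 < ν₀)
    (hν : ∀ t ∈ I, ∀ x, ν₀ ≤ ν t x) (hΛ : 0 ≤ Λ) (hL : 0 < L) (hM : 0 ≤ M)
    (hB : ∀ t ∈ I, ∀ x, IsBernsteinAt (Q t) (b t) (c t) (ν t x) Λ L M x)
    (hgrowthQ : ∀ t ∈ I, ∀ x : Euc d, √(∑ i, (∑ j, Q t x i j * x j) ^ 2) + ∑ i, Q t x i i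
      ≤ C₁ * (1 + ‖x‖ ^ 2) * ν t x)
    (hgrowthb : ∀ t ∈ I, ∀ x : Euc d, ∑ i, b t x i * x i ≤ C₂ * (1 + ‖x‖ ^ 2) * ν t x)
    {μ : ℝ} (hμ : 0 < μ) : ∃ a > 0, HasRemainderBound Q b c a μ (a / (2 * L)) I := by
  obtain ⟨K₀, hK₀, hderiv⟩ := exists_abs_deriv_smoothTransition_le
  set K := K₀ * (4 + 6 * (|C₁| + |C₂|) + 24 * d * |C₁|)
  have hK : 0 ≤ K := by positivity
  obtain ⟨a, ha, hlt⟩ := exists_pos_mul_lt hμ (1 / ν₀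
    + 2 * ((d ^ 3 * Λ + 2 * d ^ 2 * K) * K + K + M) + (d ^ 3 * Λ + 2 * d ^ 2 * K) ^ 2 / μ)
  refine ⟨a, ha, fun t ht x R hR w hw τ hτ => ?_⟩
  have hν' := hν₀.le.trans (hν t ht x)
  have hcutoff := isCutoffAt_cutoff hR hν' ((hB t ht x).posSemidef hν' (hsymm t ht x)) hderiv
    (hgrowthQ t ht x) (hgrowthb t ht x)
  exact (hB t ht x).remainder_zero_le hcutoff hΛ hL hM hK hν₀ (hν t ht x)
    (fun i j => (hcoef.diffusion i j).differentiable t ht x)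
    (fun i => (hcoef.drift i).differentiable t ht x) (hcoef.potential.differentiable t ht x)
    hw hτ hμ (by rw [mul_comm]; exact hlt.le)

theorem IsClassicalSolution.norm_fderiv_rpow_le {s T p a ζ c₁ : ℝ} {f : Euc d → ℝ}
    {u v W : ℝ → Euc d → ℝ} (hu : IsClassicalSolution d Q b c s f u) (hub : BoundedOnStrips d s u)
    (hv : IsClassicalSolution d Q b c s (fun x => |f x| ^ p) v) (hvb : BoundedOnStrips d s v)
    (hcoef : HasSpatiallyC1Coeffs Q b c (Icc s T))
    (hQ : ∀ t ∈ Icc s T, ∀ x, (Matrix.of (Q t x)).PosSemidef)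
    (hc : ∀ t ∈ Icc s T, ∀ x, c t x ≤ c₁) (hc₁ : 0 ≤ c₁) (hp : 1 ≤ p) (ha : 0 < a) (hζ : 0 ≤ ζ)
    (hrem : HasRemainderBound Q b c a (min 2 (2 * p - 2)) ζ (Icc s T))
    (hW : IsCoerciveSupersolution Q b c s T W) (hsT : s < T) (x : Euc d) :
    ‖fderiv ℝ (u T) x‖ ^ p ≤ (2 / a) ^ (p / 2) * max 1 ((T - s) ^ (-(p / 2)))
      * Real.exp (((p - 1) * c₁ + p / 2 * (ζ + 1)) * (T - s)) * v T x := by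
  have hp0 : 0 < p := one_pos.trans_le hp
  have hlam : 2 / p * ((p - 1) * c₁ + p / 2 * (ζ + 1)) = (2 - 2 / p) * c₁ + ζ + 1 := by
    field_simp
    ring
  have hlam0 : 0 ≤ 2 / p * ((p - 1) * c₁ + p / 2 * (ζ + 1)) := by
    have := mul_nonneg (sub_nonneg.2 hp) hc₁
    positivity
  have hμr : min 2 (2 * p - 2) ≤ 4 / (2 / p) - 2 := by
    rw [show 4 / (2 / p) = 2 * p by field_simp; norm_num]
    exact min_le_right _ _
  have hdatum (y : Euc d) : f y ^ 2 ≤ (|f y| ^ p) ^ (2 / p) := by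
    rw [← Real.rpow_mul (abs_nonneg _), mul_div_cancel₀ _ hp0.ne', Real.rpow_two, sq_abs]
  obtain ⟨B, hB⟩ := hub T hsT
  obtain ⟨B', hB'⟩ := hvb T hsT
  have hsT' : 0 < T - s := sub_pos.2 hsT
  obtain ⟨hv0, hle⟩ := hu.mul_norm_fderiv_sq_le hcoef hQ hc hB (div_pos two_pos hp0)
    (div_le_self zero_le_two hp) (min_le_left _ _) hμr ha.le hζ hrem hlam0 (hlam ▸ lt_add_one _)
    (δ := min 1 (T - s) / 2) ⟨by positivity, by linarith [min_le_left 1 (T - s)]⟩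
    (by linarith [min_le_right 1 (T - s)]) hW (fun y => Real.rpow_nonneg (abs_nonneg (f y)) p)
    hdatum hv hB' x
  exact rpow_le_of_mul_sq_le hp0 ha hsT' (norm_nonneg _) hv0 hle

theorem gradient_estimate_Cb_data_general (hI : ∀ ⦃t t' : ℝ⦄, t ∈ I → t ≤ t' → t' ∈ I)
    (hcoef : HasSpatiallyC1Coeffs Q b c I) (hsymm : ∀ t ∈ I, ∀ x i j, Q t x i j = Q t x j i)
    (hν₀ : 0 < ν₀) (hν : ∀ t ∈ I, ∀ x, ν₀ ≤ ν t x) {c₀ : ℝ} (hc₀ : ∀ t ∈ I, ∀ x, c t x ≤ c₀)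
    (hΛ : 0 ≤ Λ) (hL : 0 < L) (hM : 0 ≤ M)
    (hB : ∀ t ∈ I, ∀ x, IsBernsteinAt (Q t) (b t) (c t) (ν t x) Λ L M x)
    (hgrowthQ : ∀ t ∈ I, ∀ x : Euc d, √(∑ i, (∑ j, Q t x i j * x j) ^ 2) + ∑ i, Q t x i i
      ≤ C₁ * (1 + ‖x‖ ^ 2) * ν t x)
    (hgrowthb : ∀ t ∈ I, ∀ x : Euc d, ∑ i, b t x i * x i ≤ C₂ * (1 + ‖x‖ ^ 2) * ν t x)
    (hsuper : ∀ s T, Icc s T ⊆ I → ∃ W, IsCoerciveSupersolution Q b c s T W)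
    {p : ℝ} (hp : 1 < p) :
    ∃ a > 0, ∃ ω ≥ 0, ∀ s ∈ I, ∀ f : Euc d → ℝ, ∀ u v : ℝ → Euc d → ℝ,
      IsClassicalSolution d Q b c s f u → BoundedOnStrips d s u →
      IsClassicalSolution d Q b c s (fun x => |f x| ^ p) v → BoundedOnStrips d s v →
      ∀ t, s < t → ∀ x, ‖fderiv ℝ (u t) x‖ ^ p
        ≤ a * max 1 ((t - s) ^ (-(p / 2))) * Real.exp (ω * (t - s)) * v t x := by
  obtain ⟨a, ha, hrem⟩ := exists_hasRemainderBound hcoef hsymm hν₀ hν hΛ hL hM hB hgrowthQ hgrowthb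
    (lt_min two_pos (show 0 < 2 * p - 2 by linarith))
  have hω : 0 ≤ (p - 1) * max c₀ 0 + p / 2 * (a / (2 * L) + 1) := by
    have := mul_nonneg (sub_nonneg.2 hp.le) (le_max_right c₀ 0)
    positivity
  refine ⟨(2 / a) ^ (p / 2), by positivity, _, hω, fun s hs f u v hu hub hv hvb t hst x => ?_⟩
  have hsub : Icc s t ⊆ I := fun τ hτ => hI hs hτ.1
  have hQ (τ : ℝ) (hτ : τ ∈ Icc s t) (y : Euc d) : (Matrix.of (Q τ y)).PosSemidef :=
    (hB τ (hsub hτ) y).posSemidef (hν₀.le.trans (hν τ (hsub hτ) y)) (hsymm τ (hsub hτ) y)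
  obtain ⟨W, hW⟩ := hsuper s t hsub
  exact hu.norm_fderiv_rpow_le hub hv hvb (hcoef.mono hsub) hQ
    (fun τ hτ y => (hc₀ τ (hsub hτ) y).trans (le_max_left c₀ 0)) (le_max_right c₀ 0) hp.le ha
    (by positivity) (fun τ hτ => hrem τ (hsub hτ)) hW hst x

end GradientEstimate

/-- short-time singular pointwise gradient estimate
`|∇_x u(t,x)|^p ≤ a_p·max{1,(t−s)^{−p/2}}·e^{ω_p(t−s)}·v(t,x)`, `v` being the solution with
datum `|f|^p`. -/
theorem gradient_estimate_Cb_data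
    (d : ℕ) (hd : 1 ≤ d) (I : Set ℝ)
    (hI : ∀ ⦃t t' : ℝ⦄, t ∈ I → t ≤ t' → t' ∈ I)
    (Q : ℝ → Euc d → Fin d → Fin d → ℝ) (b : ℝ → Euc d → Fin d → ℝ) (c : ℝ → Euc d → ℝ)
    (α : ℝ) (hα : α ∈ Ioo (0:ℝ) 1)
    (hQhold : ∀ i j, LocHolderParab d α I (fun t x => Q t x i j))
    (hbhold : ∀ j, LocHolderParab d α I (fun t x => b t x j))
    (hchold : LocHolderParab d α I c)
    (hsymm : ∀ t ∈ I, ∀ x : Euc d, ∀ i j, Q t x i j = Q t x j i)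
    (ν₀ : ℝ) (hν₀ : 0 < ν₀) (hell : ∀ t ∈ I, ∀ x : Euc d, ν₀ ≤ minEig d (Q t x))
    (c₀ : ℝ) (hc₀ : ∀ t ∈ I, ∀ x : Euc d, c t x ≤ c₀)
    -- first-order Bernstein hypotheses with constant growth functions
    (hQdiff : ∀ t ∈ I, ∀ (x : Euc d) (i j : Fin d),
      DifferentiableAt ℝ (fun y => Q t y i j) x)
    (hbdiff : ∀ t ∈ I, ∀ (x : Euc d) (j : Fin d),
      DifferentiableAt ℝ (fun y => b t y j) x)
    (hcdiff : ∀ t ∈ I, ∀ x : Euc d, DifferentiableAt ℝ (fun y => c t y) x)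
    (hgradHold : ∃ α' ∈ Ioo (0:ℝ) 1,
      (∀ i j k, LocHolderParab d α' I
        (fun t x => fderiv ℝ (fun y => Q t y i j) x (EuclideanSpace.single k 1))) ∧
      (∀ j k, LocHolderParab d α' I
        (fun t x => fderiv ℝ (fun y => b t y j) x (EuclideanSpace.single k 1))) ∧
      (∀ k, LocHolderParab d α' I
        (fun t x => fderiv ℝ (fun y => c t y) x (EuclideanSpace.single k 1))))
    (C₁ C₂ : ℝ)
    (hgrowthQ : ∀ t ∈ I, ∀ x : Euc d,
      Real.sqrt (∑ i, (∑ j, Q t x i j * x j) ^ 2) + (∑ i, Q t x i i) ≤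
        C₁ * (1 + ‖x‖ ^ 2) * minEig d (Q t x))
    (hgrowthb : ∀ t ∈ I, ∀ x : Euc d,
      (∑ i, b t x i * x i) ≤ C₂ * (1 + ‖x‖ ^ 2) * minEig d (Q t x))
    (r₀ : ℝ → Euc d → ℝ)
    (hJac : ∀ t ∈ I, ∀ (x : Euc d) (ξ : Euc d),
      (∑ i, ∑ j, fderiv ℝ (fun y => b t y i) x (EuclideanSpace.single j 1) * ξ i * ξ j) ≤
        r₀ t x * ‖ξ‖ ^ 2)
    (C γ : ℝ) (hC : 0 < C) (hγ : γ ∈ Ioo (0:ℝ) 1)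
    (hQgrad : ∀ t ∈ I, ∀ (x : Euc d) (i j : Fin d),
      ‖fderiv ℝ (fun y => Q t y i j) x‖ ≤ C * minEig d (Q t x) ^ γ)
    (ϱ : ℝ → Euc d → ℝ)
    (hϱpos : ∀ a b' : ℝ, Icc a b' ⊆ I → ∃ ε > 0, ∀ t ∈ Icc a b', ∀ x : Euc d, ε ≤ ϱ t x)
    (hcbd : ∀ t ∈ I, ∀ x : Euc d, |c t x| ≤ ϱ t x)
    (hcgrad : ∀ t ∈ I, ∀ x : Euc d, ‖fderiv ℝ (fun y => c t y) x‖ ≤ ϱ t x)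
    (L M : ℝ) (hL : 0 < L)
    (hdiss : ∀ t ∈ I, ∀ x : Euc d,
      r₀ t x + L * ϱ t x ^ 2 ≤ M * minEig d (Q t x) ^ γ)
    -- Hypothesis 4.4: a Lyapunov function with bounded image under A on bounded time intervals
    (hUltima : ∀ a b' : ℝ, Icc a b' ⊆ I →
      ∃ φJ : Euc d → ℝ, ContDiff ℝ 2 φJ ∧
        (∀ M' : ℝ, ∃ R : ℝ, ∀ x : Euc d, R ≤ ‖x‖ → M' ≤ φJ x) ∧
        ∃ MJ > 0, ∀ t ∈ Icc a b', ∀ x : Euc d, Aop d Q b c t φJ x ≤ MJ) :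
    ∀ p : ℝ, 1 < p →
      ∃ a > 0, ∃ ω ≥ (0:ℝ),
        ∀ s ∈ I, ∀ f : Euc d → ℝ, Continuous f → (∃ Mf, ∀ x, |f x| ≤ Mf) →
        ∀ u v : ℝ → Euc d → ℝ,
          IsClassicalSolution d Q b c s f u → BoundedOnStrips d s u →
          IsClassicalSolution d Q b c s (fun x => |f x| ^ p) v → BoundedOnStrips d s v →
          ∀ t, s < t → ∀ x : Euc d,
            ‖fderiv ℝ (u t) x‖ ^ p ≤
              a * max 1 ((t - s) ^ (-(p / 2))) * Real.exp (ω * (t - s)) * v t x := by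
  have hcoef : HasSpatiallyC1Coeffs Q b c I := by
    obtain ⟨α', hα', hQgradH, hbgradH, hcgradH⟩ := hgradHold
    exact ⟨fun i j => (hQhold i j).isSpatiallyC1On hα.1 hα'.1 (fun t ht x => hQdiff t ht x i j)
        (hQgradH i j),
      fun i => (hbhold i).isSpatiallyC1On hα.1 hα'.1 (fun t ht x => hbdiff t ht x i) (hbgradH i),
      hchold.isSpatiallyC1On hα.1 hα'.1 hcdiff hcgradH⟩
  have hbernstein (t : ℝ) (ht : t ∈ I) (x : Euc d) := isBernsteinAt_minEig hν₀ (hell t ht x)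
    hγ.2.le (hQgrad t ht x) (hJac t ht x) (hcgrad t ht x) hL.le (hdiss t ht x)
  have hsuper (s T : ℝ) (hsub : Icc s T ⊆ I) : ∃ W, IsCoerciveSupersolution Q b c s T W := by
    obtain ⟨φ, hφ, hcoercive, MJ, hMJ, hA⟩ := hUltima s T hsub
    exact exists_isCoerciveSupersolution hφ hcoercive (le_max_right c₀ 0)
      (fun t ht x => (hc₀ t (hsub ht) x).trans (le_max_left c₀ 0)) hMJ.le hA
  intro p hp
  obtain ⟨a, ha, ω, hω, h⟩ := gradient_estimate_Cb_data_general hI hcoef hsymm hν₀ hell hc₀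
    (by positivity) hL (by positivity) hbernstein hgrowthQ hgrowthb hsuper hp
  exact ⟨a, ha, ω, hω, fun s hs f _ _ => h s hs f⟩
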